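/- arXiv:2302.11946 — 2 statements merged into one kernel-verified Lean document; each statement's English description precedes it below -/
import Mathlib

section
/- For each j = 1,…,d, the function q_j(ξ,s) = −∫_{ℝ^d} a(ξ−η) μ(ξ,η,s)(η_j − ξ_j) dη is well defined, belongs to L^∞(𝕋^{d+1}), and satisfies ∫_{𝕋^d} q_j(ξ,s) dξ = 0 for almost every s; consequently the corrector equation ∂_s χ_j − A(s)χ_j = q_j has a time-periodic solution χ_j ∈ L²(𝕋^{d+1}) ∩ H¹((0,1); L²(𝕋^d)), unique under the normalization ∫_{𝕋^{d+1}} χ_j dξ ds = 0. -/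
open MeasureTheory

noncomputable section

/-- The periodicity cell `[0,1)^d`, identified with the torus `𝕋^d`. -/
def cube (d : ℕ) : Set (Fin d → ℝ) := Set.univ.pi fun _ => Set.Ico (0 : ℝ) 1

/-- The operator `A(s)` applied pointwise. -/
def Aop {d : ℕ} (a : (Fin d → ℝ) → ℝ) (μ : (Fin d → ℝ) → (Fin d → ℝ) → ℝ → ℝ)
    (s : ℝ) (v : (Fin d → ℝ) → ℝ) (ξ : Fin d → ℝ) : ℝ :=
  ∫ η, a (ξ - η) * μ ξ η s * (v η - v ξ)

/-- `β` is a time-periodic solution, in `L²(𝕋^{d+1}) ∩ H¹((0,1); L²(𝕋^d))`, of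
`∂_s β - A(s)β = θ` (in the equivalent integrated-in-time formulation). -/
def IsCellSol {d : ℕ} (a : (Fin d → ℝ) → ℝ) (μ : (Fin d → ℝ) → (Fin d → ℝ) → ℝ → ℝ)
    (θ : (Fin d → ℝ) → ℝ → ℝ) (β : (Fin d → ℝ) → ℝ → ℝ) : Prop :=
  Measurable (fun p : (Fin d → ℝ) × ℝ => β p.1 p.2) ∧
  (∀ ξ s, ∀ k : Fin d → ℤ, β (ξ + fun i => (k i : ℝ)) s = β ξ s) ∧
  (∀ ξ s, β ξ (s + 1) = β ξ s) ∧
  IntegrableOn (fun p : (Fin d → ℝ) × ℝ => (β p.1 p.2) ^ 2)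
    (cube d ×ˢ Set.Ioo (0 : ℝ) 1) ∧
  (∀ᵐ ξ ∂(volume : Measure (Fin d → ℝ)), ∀ s ∈ Set.Icc (0 : ℝ) 1,
    β ξ s = β ξ 0 + ∫ τ in (0 : ℝ)..s, (Aop a μ τ (fun η => β η τ) ξ + θ ξ τ))

/-- The right-hand side of the corrector equation:
`q_j(ξ,s) = -∫_{ℝ^d} a(ξ-η) μ(ξ,η,s)(η_j - ξ_j) dη`. -/
def qfun {d : ℕ} (a : (Fin d → ℝ) → ℝ) (μ : (Fin d → ℝ) → (Fin d → ℝ) → ℝ → ℝ)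
    (j : Fin d) (ξ : Fin d → ℝ) (s : ℝ) : ℝ :=
  -∫ η, a (ξ - η) * μ ξ η s * (η j - ξ j)


section
open scoped ENNReal Topology Pointwise
open Set

/-- Spatial periodicity. -/
def SPer {d : ℕ} {Y : Type*} (g : (Fin d → ℝ) → Y) : Prop :=
  ∀ ξ, ∀ k : Fin d → ℤ, g (ξ + fun i => (k i : ℝ)) = g ξ

lemma measurableSet_cube (d : ℕ) : MeasurableSet (cube d) :=
  MeasurableSet.univ_pi fun _ => measurableSet_Ico

lemma volume_cube (d : ℕ) : volume (cube d) = 1 := by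
  simp [cube, volume_pi_pi]

lemma cube_fund (d : ℕ) :
    IsAddFundamentalDomain (Submodule.span ℤ (Set.range (Pi.basisFun ℝ (Fin d)))).toAddSubgroup (cube d)
      (volume : Measure (Fin d → ℝ)) := by
  have := ZSpan.isAddFundamentalDomain' (Pi.basisFun ℝ (Fin d)) volume
  rwa [ZSpan.fundamentalDomain_pi_basisFun] at this

instance lattice_countable (d : ℕ) :
    Countable (Submodule.span ℤ (Set.range (Pi.basisFun ℝ (Fin d)))).toAddSubgroup :=
  inferInstanceAs (Countable (Submodule.span ℤ (Set.range (Pi.basisFun ℝ (Fin d)))))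

lemma lattice_int {d : ℕ} (x : Fin d → ℝ)
    (hx : x ∈ Submodule.span ℤ (Set.range (Pi.basisFun ℝ (Fin d)))) :
    ∃ k : Fin d → ℤ, x = fun i => (k i : ℝ) := by
  have := ((Pi.basisFun ℝ (Fin d)).mem_span_iff_repr_mem ℤ x).mp hx
  choose k hk using this
  refine ⟨k, funext fun i => ?_⟩
  simpa using (hk i).symm

lemma SPer.vadd {d : ℕ} {Y : Type*} {g : (Fin d → ℝ) → Y} (hg : SPer g)
    (l : (Submodule.span ℤ (Set.range (Pi.basisFun ℝ (Fin d)))).toAddSubgroup) (x : Fin d → ℝ) :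
    g (l +ᵥ x) = g x := by
  obtain ⟨k, hk⟩ := lattice_int l.1 l.2
  have : (l +ᵥ x : Fin d → ℝ) = x + fun i => (k i : ℝ) := by
    rw [← hk, add_comm]; rfl
  rw [this, hg]

lemma setLIntegral_shift {d : ℕ} (g : (Fin d → ℝ) → ℝ≥0∞) (z : Fin d → ℝ) :
    ∫⁻ ξ in cube d, g (ξ + z) = ∫⁻ ξ in z +ᵥ cube d, g ξ := by
  have h : MeasurePreserving (fun ξ : Fin d → ℝ => ξ + z) volume volume :=
    measurePreserving_add_right volume z
  rw [h.setLIntegral_comp_emb (MeasurableEquiv.addRight z).measurableEmbedding]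
  congr 2
  ext x
  simp only [mem_vadd_set, mem_image, vadd_eq_add, add_comm]

lemma SPer.setLIntegral_add {d : ℕ} {g : (Fin d → ℝ) → ℝ≥0∞} (hg : SPer g) (z : Fin d → ℝ) :
    ∫⁻ ξ in cube d, g (ξ + z) = ∫⁻ ξ in cube d, g ξ := by
  rw [setLIntegral_shift]
  exact ((cube_fund d).vadd_of_comm z).setLIntegral_eq (cube_fund d) g hg.vadd

lemma SPer.setIntegral_add {d : ℕ} {g : (Fin d → ℝ) → ℝ} (hg : SPer g) (z : Fin d → ℝ) :
    ∫ ξ in cube d, g (ξ + z) = ∫ ξ in cube d, g ξ := by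
  have h : MeasurePreserving (fun ξ : Fin d → ℝ => ξ + z) volume volume :=
    measurePreserving_add_right volume z
  have h1 : ∫ ξ in cube d, g (ξ + z) = ∫ ξ in z +ᵥ cube d, g ξ := by
    rw [← h.setIntegral_preimage_emb (MeasurableEquiv.addRight z).measurableEmbedding g]
    congr 2
    ext x
    simp [mem_vadd_set_iff_neg_vadd_mem, add_comm]
  rw [h1]
  exact ((cube_fund d).vadd_of_comm z).setIntegral_eq (cube_fund d) hg.vadd

lemma SPer.ae_of_cube {d : ℕ} {p : (Fin d → ℝ) → Prop} (hp : SPer p)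
    (h : ∀ᵐ ξ ∂(volume.restrict (cube d)), p ξ) : ∀ᵐ ξ : Fin d → ℝ, p ξ := by
  rw [ae_restrict_iff' (measurableSet_cube d)] at h
  rw [ae_iff] at h ⊢
  refine (cube_fund d).measure_zero_of_invariant _ (fun l => ?_) ?_
  · ext x
    rw [mem_vadd_set_iff_neg_vadd_mem]
    simp only [mem_setOf_eq]
    rw [hp.vadd]
  · convert h using 2
    ext x; simp [and_comm]

lemma exp_ibp (c s : ℝ) (k : ℝ → ℝ) (hk : IntervalIntegrable k volume 0 s) :
    Real.exp (c * s) * ∫ τ in (0:ℝ)..s, k τ =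
      (∫ τ in (0:ℝ)..s, Real.exp (c * τ) * k τ) +
      ∫ τ in (0:ℝ)..s, c * Real.exp (c * τ) * ∫ r in (0:ℝ)..τ, k r := by
  have hf : AbsolutelyContinuousOnInterval (fun τ => Real.exp (c * τ)) 0 s := by
    apply ContDiffOn.absolutelyContinuousOnInterval
    fun_prop
  have hg : AbsolutelyContinuousOnInterval (fun τ => ∫ r in (0:ℝ)..τ, k r) 0 s :=
    hk.absolutelyContinuousOnInterval_intervalIntegral (by simp)
  have h := hf.integral_mul_deriv_eq_deriv_mul hg
  have hd : ∀ x, deriv (fun τ => Real.exp (c * τ)) x = c * Real.exp (c * x) := by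
    intro x
    have := (((hasDerivAt_id x).const_mul c).exp).deriv
    simpa [mul_comm] using this
  have h1 : ∫ x in (0:ℝ)..s, Real.exp (c * x) * deriv (fun τ => ∫ r in (0:ℝ)..τ, k r) x
      = ∫ τ in (0:ℝ)..s, Real.exp (c * τ) * k τ := by
    apply intervalIntegral.integral_congr_ae
    filter_upwards [hk.ae_hasDerivAt_integral] with x hx hx'
    rw [(hx (uIoc_subset_uIcc hx') 0 (by simp)).deriv]
  rw [h1] at h
  simp only [hd] at h
  rw [h]
  simp


/-- periodic resolvent kernel of `∂_s + l` on the unit circle -/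
def gk (l s τ : ℝ) : ℝ :=
  Real.exp (-l * s) * Real.exp (l * τ) * (1 / (Real.exp l - 1) + if τ ≤ s then 1 else 0)

/-- periodic resolvent of `∂_s + l` on the unit circle -/
def Sr (l : ℝ) (h : ℝ → ℝ) (s : ℝ) : ℝ := ∫ τ in Ioo (0:ℝ) 1, gk l (Int.fract s) τ * h τ

lemma exp_sub_one_pos {l : ℝ} (hl : 0 < l) : 0 < Real.exp l - 1 := by
  have := Real.one_lt_exp_iff.mpr hl
  linarith

lemma gk_meas (l : ℝ) : Measurable (fun p : ℝ × ℝ => gk l p.1 p.2) := by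
  unfold gk
  refine Measurable.mul (by fun_prop) (Measurable.add (by fun_prop) ?_)
  exact Measurable.ite (measurableSet_le measurable_snd measurable_fst) measurable_const
    measurable_const

lemma gk_nonneg {l : ℝ} (hl : 0 < l) (s τ : ℝ) : 0 ≤ gk l s τ := by
  have := exp_sub_one_pos hl
  unfold gk
  split_ifs <;> positivity

lemma gk_lower {l : ℝ} (hl : 0 < l) {s τ : ℝ} (hs : s ∈ Icc (0:ℝ) 1) (hτ : τ ∈ Ioo (0:ℝ) 1) :
    Real.exp (-l) / (Real.exp l - 1) ≤ gk l s τ := by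
  have h0 := exp_sub_one_pos hl
  have h1 : Real.exp (-l) ≤ Real.exp (-l * s) := Real.exp_le_exp.mpr (by nlinarith [hs.2])
  have h2 : 1 ≤ Real.exp (l * τ) := Real.one_le_exp (by nlinarith [hτ.1])
  unfold gk
  have h3 : 1 / (Real.exp l - 1) ≤ 1 / (Real.exp l - 1) + if τ ≤ s then 1 else 0 := by
    split_ifs <;> simp
  calc _ = Real.exp (-l) * 1 * (1 / (Real.exp l - 1)) := by ring
    _ ≤ _ := by gcongr

lemma gk_upper {l : ℝ} (hl : 0 < l) {s τ : ℝ} (hs : s ∈ Icc (0:ℝ) 1) (hτ : τ ∈ Ioo (0:ℝ) 1) :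
    gk l s τ ≤ Real.exp l * (1 / (Real.exp l - 1) + 1) := by
  have h0 := exp_sub_one_pos hl
  have h1 : Real.exp (-l * s) ≤ 1 := Real.exp_le_one_iff.mpr (by nlinarith [hs.1])
  have h2 : Real.exp (l * τ) ≤ Real.exp l := Real.exp_le_exp.mpr (by nlinarith [hτ.2])
  unfold gk
  have h3 : (1 / (Real.exp l - 1) + if τ ≤ s then (1:ℝ) else 0) ≤ 1 / (Real.exp l - 1) + 1 := by
    split_ifs <;> simp
  have h4 : 0 ≤ (1 / (Real.exp l - 1) + if τ ≤ s then (1:ℝ) else 0) := by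
    split_ifs <;> positivity
  calc _ ≤ 1 * Real.exp l * (1 / (Real.exp l - 1) + 1) := by gcongr
    _ = _ := by ring

lemma fract_mem (s : ℝ) : Int.fract s ∈ Icc (0:ℝ) 1 :=
  ⟨Int.fract_nonneg s, (Int.fract_lt_one s).le⟩

lemma gk_mul_integrable {l : ℝ} (hl : 0 < l) {h : ℝ → ℝ} (hh : IntegrableOn h (Ioo 0 1)) {s : ℝ}
    (hs : s ∈ Icc (0:ℝ) 1) : IntegrableOn (fun τ => gk l s τ * h τ) (Ioo 0 1) := by
  refine hh.bdd_mul (c := Real.exp l * (1 / (Real.exp l - 1) + 1)) ?_ ?_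
  · exact ((gk_meas l).comp (measurable_const.prodMk measurable_id)).aestronglyMeasurable
  · filter_upwards [ae_restrict_mem measurableSet_Ioo] with τ hτ
    rw [Real.norm_of_nonneg (gk_nonneg hl _ _)]
    exact gk_upper hl hs hτ

lemma int_gk_formula {l : ℝ} {h : ℝ → ℝ} (hh : IntegrableOn h (Ioo 0 1)) {s : ℝ}
    (hs : s ∈ Icc (0:ℝ) 1) :
    ∫ τ in Ioo (0:ℝ) 1, gk l s τ * h τ = Real.exp (-l * s) *
      (1 / (Real.exp l - 1) * (∫ τ in (0:ℝ)..1, Real.exp (l * τ) * h τ) +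
        ∫ τ in (0:ℝ)..s, Real.exp (l * τ) * h τ) := by
  have hInt : IntegrableOn (fun τ => Real.exp (l * τ) * h τ) (Ioo 0 1) := by
    have h1 : IntervalIntegrable h volume 0 1 :=
      (intervalIntegrable_iff_integrableOn_Ioo_of_le zero_le_one).mpr hh
    have h2 := h1.continuousOn_mul (g := fun τ => Real.exp (l * τ)) (by fun_prop)
    exact (intervalIntegrable_iff_integrableOn_Ioo_of_le zero_le_one).mp h2
  have e1 : ∀ τ, gk l s τ * h τ = Real.exp (-l * s) * (1 / (Real.exp l - 1) *
      (Real.exp (l * τ) * h τ) + (Iic s).indicator (fun τ => Real.exp (l * τ) * h τ) τ) := by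
    intro τ
    unfold gk
    by_cases h : τ ≤ s
    · rw [indicator_of_mem (by exact h)]; simp [h]; ring
    · rw [indicator_of_notMem (by exact h)]; simp [h]; ring
  simp_rw [e1]
  rw [integral_const_mul, integral_add (hInt.const_mul _) (hInt.indicator measurableSet_Iic),
    integral_const_mul, setIntegral_indicator measurableSet_Iic,
    intervalIntegral.integral_of_le zero_le_one, intervalIntegral.integral_of_le hs.1,
    integral_Ioc_eq_integral_Ioo]
  congr 2
  apply setIntegral_congr_set
  have : (Ioo (0:ℝ) 1 ∩ Iic s : Set ℝ) =ᵐ[volume] (Ioc 0 1 ∩ Iic s : Set ℝ) :=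
    Filter.EventuallyEq.inter Ioo_ae_eq_Ioc (ae_eq_refl _)
  refine this.trans ?_
  rw [Ioc_inter_Iic, min_eq_right hs.2]
  exact ae_eq_refl _

lemma Sr_eq {l : ℝ} (hl : 0 < l) {h : ℝ → ℝ} (hh : IntegrableOn h (Ioo 0 1)) {s : ℝ}
    (hs : s ∈ Icc (0:ℝ) 1) :
    Sr l h s = Real.exp (-l * s) *
      (1 / (Real.exp l - 1) * (∫ τ in (0:ℝ)..1, Real.exp (l * τ) * h τ) +
        ∫ τ in (0:ℝ)..s, Real.exp (l * τ) * h τ) := by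
  have h0 := exp_sub_one_pos hl
  unfold Sr
  rcases eq_or_lt_of_le hs.2 with h1 | h1
  · subst h1
    rw [Int.fract_one, int_gk_formula hh ⟨le_rfl, zero_le_one⟩]
    have : Real.exp (-l * 1) = (Real.exp l)⁻¹ := by rw [mul_one, Real.exp_neg]
    rw [this]
    simp
    field_simp
    ring
  · rw [Int.fract_eq_self.mpr ⟨hs.1, h1⟩, int_gk_formula hh hs]

lemma ode_E {l : ℝ} (hl : 0 < l) {h : ℝ → ℝ} (hh : IntegrableOn h (Ioo 0 1)) {s : ℝ}
    (hs : s ∈ Icc (0:ℝ) 1) :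
    Sr l h s = Sr l h 0 + ∫ τ in (0:ℝ)..s, (h τ - l * Sr l h τ) := by
  have h1 : IntervalIntegrable h volume 0 1 :=
    (intervalIntegrable_iff_integrableOn_Ioo_of_le zero_le_one).mpr hh
  have hsub : uIcc (0:ℝ) s ⊆ uIcc 0 1 := by
    rw [uIcc_of_le hs.1, uIcc_of_le zero_le_one]; exact Icc_subset_Icc_right hs.2
  have h1s : IntervalIntegrable h volume 0 s := h1.mono_set hsub
  have h2 : IntervalIntegrable (fun τ => Real.exp (l * τ) * h τ) volume 0 s :=
    h1s.continuousOn_mul (g := fun τ => Real.exp (l * τ)) (by fun_prop)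
  set C := 1 / (Real.exp l - 1) * (∫ τ in (0:ℝ)..1, Real.exp (l * τ) * h τ) with hC
  have ibp := exp_ibp (-l) s _ h2
  have ibp0 := exp_ibp (-l) s (fun _ => (0:ℝ)) (by simp)
  have e1 : ∀ τ, Real.exp (-l * τ) * (Real.exp (l * τ) * h τ) = h τ := by
    intro τ; rw [← mul_assoc, ← Real.exp_add]; simp
  simp only [e1] at ibp
  have hK : ContinuousOn (fun τ => ∫ r in (0:ℝ)..τ, Real.exp (l * r) * h r) (uIcc 0 s) :=
    intervalIntegral.continuousOn_primitive_interval' h2 (by simp)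
  have hexp : ∫ τ in (0:ℝ)..s, l * (Real.exp (-l * τ) * C) = C - C * Real.exp (-l * s) := by
    have : ∀ x ∈ uIcc 0 s, HasDerivAt (fun τ => - C * Real.exp (-l * τ))
        (l * (Real.exp (-l * x) * C)) x := by
      intro x _
      have := (((hasDerivAt_id x).const_mul (-l)).exp).const_mul (-C)
      simp only [id] at this
      refine this.congr_deriv (by ring)
    rw [intervalIntegral.integral_eq_sub_of_hasDerivAt this
      (Continuous.intervalIntegrable (by fun_prop) _ _)]
    simp; ring
  have e2 : ∫ τ in (0:ℝ)..s, (h τ - l * Sr l h τ) = ∫ τ in (0:ℝ)..s, (h τ -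
      (l * (Real.exp (-l * τ) * C) + l * Real.exp (-l * τ) *
        ∫ r in (0:ℝ)..τ, Real.exp (l * r) * h r)) := by
    apply intervalIntegral.integral_congr
    intro τ hτ
    rw [uIcc_of_le hs.1] at hτ
    simp only
    rw [Sr_eq hl hh ⟨hτ.1, hτ.2.trans hs.2⟩]
    ring
  have i1 : IntervalIntegrable (fun τ => l * (Real.exp (-l * τ) * C)) volume 0 s :=
    Continuous.intervalIntegrable (by fun_prop) _ _
  have i2 : IntervalIntegrable (fun τ => l * Real.exp (-l * τ) *
        ∫ r in (0:ℝ)..τ, Real.exp (l * r) * h r) volume 0 s :=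
    ContinuousOn.intervalIntegrable (ContinuousOn.mul (by fun_prop) hK)
  rw [e2, intervalIntegral.integral_sub h1s (i1.add i2), intervalIntegral.integral_add i1 i2,
    hexp, Sr_eq hl hh hs, Sr_eq hl hh ⟨le_rfl, zero_le_one⟩, ← hC]
  have e3 : ∫ τ in (0:ℝ)..s, -l * Real.exp (-l * τ) *
      ∫ r in (0:ℝ)..τ, Real.exp (l * r) * h r = - ∫ τ in (0:ℝ)..s, l * Real.exp (-l * τ) *
      ∫ r in (0:ℝ)..τ, Real.exp (l * r) * h r := by
    rw [← intervalIntegral.integral_neg]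
    congr 1; ext τ; ring
  rw [e3] at ibp
  rw [mul_add, ibp]
  simp
  ring

lemma ode_U {l : ℝ} (hl : 0 < l) {h y : ℝ → ℝ} (hh : IntegrableOn h (Ioo 0 1))
    (hy : ∀ s ∈ Icc (0:ℝ) 1, y s = y 0 + ∫ τ in (0:ℝ)..s, (h τ - l * y τ))
    (hyi : IntegrableOn y (Ioo 0 1)) (hper : y 1 = y 0) {s : ℝ} (hs : s ∈ Icc (0:ℝ) 1) :
    y s = Sr l h s := by
  have h0 := exp_sub_one_pos hl
  have hk : IntervalIntegrable (fun τ => h τ - l * y τ) volume 0 1 :=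
    (intervalIntegrable_iff_integrableOn_Ioo_of_le zero_le_one).mpr (hh.sub (hyi.const_mul l))
  have key : ∀ s ∈ Icc (0:ℝ) 1, Real.exp (l * s) * y s =
      y 0 + ∫ τ in (0:ℝ)..s, Real.exp (l * τ) * h τ := by
    intro s hs
    have hsub : uIcc (0:ℝ) s ⊆ uIcc 0 1 := by
      rw [uIcc_of_le hs.1, uIcc_of_le zero_le_one]; exact Icc_subset_Icc_right hs.2
    have hks := hk.mono_set hsub
    have ibp := exp_ibp l s _ hks
    have hK : ContinuousOn (fun τ => ∫ r in (0:ℝ)..τ, (h r - l * y r)) (uIcc 0 s) :=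
      intervalIntegral.continuousOn_primitive_interval' hks (by simp)
    have hexp : ∫ τ in (0:ℝ)..s, l * Real.exp (l * τ) * y 0 = Real.exp (l * s) * y 0 - y 0 := by
      have : ∀ x ∈ uIcc 0 s, HasDerivAt (fun τ => Real.exp (l * τ) * y 0)
          (l * Real.exp (l * x) * y 0) x := by
        intro x _
        have := (((hasDerivAt_id x).const_mul l).exp).mul_const (y 0)
        simp only [id] at this
        refine this.congr_deriv (by ring)
      rw [intervalIntegral.integral_eq_sub_of_hasDerivAt this
        (Continuous.intervalIntegrable (by fun_prop) _ _)]
      simp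
    have i1 : IntervalIntegrable (fun τ => Real.exp (l * τ) * (h τ - l * y τ)) volume 0 s :=
      hks.continuousOn_mul (g := fun τ => Real.exp (l * τ)) (by fun_prop)
    have i2 : IntervalIntegrable (fun τ => l * Real.exp (l * τ) *
        ∫ r in (0:ℝ)..τ, (h r - l * y r)) volume 0 s :=
      ContinuousOn.intervalIntegrable (ContinuousOn.mul (by fun_prop) hK)
    have i3 : IntervalIntegrable (fun τ => l * Real.exp (l * τ) * y 0) volume 0 s :=
      Continuous.intervalIntegrable (by fun_prop) _ _
    have : ∫ τ in (0:ℝ)..s, Real.exp (l * τ) * h τ =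
        ∫ τ in (0:ℝ)..s, (Real.exp (l * τ) * (h τ - l * y τ) + (l * Real.exp (l * τ) *
        (∫ r in (0:ℝ)..τ, (h r - l * y r)) + l * Real.exp (l * τ) * y 0)) := by
      apply intervalIntegral.integral_congr
      intro τ hτ
      rw [uIcc_of_le hs.1] at hτ
      simp only
      have := hy τ ⟨hτ.1, hτ.2.trans hs.2⟩
      generalize (∫ r in (0:ℝ)..τ, (h r - l * y r)) = z at this
      rw [this]; ring
    rw [this, intervalIntegral.integral_add i1 (i2.add i3), intervalIntegral.integral_add i2 i3,
      hexp]
    have h5 := hy s hs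
    generalize (∫ r in (0:ℝ)..s, (h r - l * y r)) = z at *
    rw [h5, mul_add, ibp]; ring
  rw [Sr_eq hl hh hs]
  have k1 := key 1 ⟨zero_le_one, le_rfl⟩
  rw [hper, mul_one] at k1
  have ks := key s hs
  have e1 : (∫ τ in (0:ℝ)..1, Real.exp (l * τ) * h τ) = (Real.exp l - 1) * y 0 := by linarith
  rw [e1, one_div, inv_mul_cancel_left₀ h0.ne', ← ks, ← mul_assoc, ← Real.exp_add]
  simp

/-- total mass of the kernel in `s` -/
lemma lint_gk {l : ℝ} (hl : 0 < l) {τ : ℝ} (hτ : τ ∈ Ioo (0:ℝ) 1) :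
    ∫⁻ s in Ioo (0:ℝ) 1, ENNReal.ofReal (gk l s τ) = ENNReal.ofReal (1 / l) := by
  have h0 := exp_sub_one_pos hl
  have hb : IntegrableOn (fun s => gk l s τ) (Ioo 0 1) := by
    refine Measure.integrableOn_of_bounded (M := Real.exp l * (1 / (Real.exp l - 1) + 1))
      (by simp) ?_ ?_
    · exact ((gk_meas l).comp (measurable_id.prodMk measurable_const)).aestronglyMeasurable
    · filter_upwards [ae_restrict_mem measurableSet_Ioo] with s hs
      rw [Real.norm_of_nonneg (gk_nonneg hl _ _)]
      exact gk_upper hl ⟨hs.1.le, hs.2.le⟩ hτ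
  rw [← ofReal_integral_eq_lintegral_ofReal hb (Filter.Eventually.of_forall fun s => gk_nonneg hl _ _)]
  congr 1
  have e1 : ∀ s, gk l s τ = Real.exp (l * τ) * (1 / (Real.exp l - 1) * Real.exp (-l * s) +
      (Ici τ).indicator (fun s => Real.exp (-l * s)) s) := by
    intro s
    unfold gk
    by_cases h : τ ≤ s
    · rw [indicator_of_mem (by exact h)]; simp [h]; ring
    · rw [indicator_of_notMem (by exact h)]; simp [h]; ring
  have hInt : IntegrableOn (fun s => Real.exp (-l * s)) (Ioo 0 1) :=
    (Continuous.integrableOn_Icc (by fun_prop)).mono_set Ioo_subset_Icc_self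
  have hF : ∀ p q : ℝ, ∫ s in p..q, Real.exp (-l * s) =
      (Real.exp (-l * p) - Real.exp (-l * q)) / l := by
    intro p q
    have : ∀ x ∈ uIcc p q, HasDerivAt (fun s => - Real.exp (-l * s) / l) (Real.exp (-l * x)) x := by
      intro x _
      have := (((hasDerivAt_id x).const_mul (-l)).exp).neg.div_const l
      simp only [id] at this
      refine this.congr_deriv (by field_simp)
    rw [intervalIntegral.integral_eq_sub_of_hasDerivAt this
      (Continuous.intervalIntegrable (by fun_prop) _ _)]
    ring
  simp_rw [e1]
  rw [integral_const_mul, integral_add (hInt.const_mul _) (hInt.indicator measurableSet_Ici),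
    integral_const_mul, setIntegral_indicator measurableSet_Ici]
  have e2 : (Ioo (0:ℝ) 1 ∩ Ici τ) = Ico τ 1 := by
    ext x; simp only [mem_inter_iff, mem_Ioo, mem_Ici, mem_Ico]
    constructor
    · rintro ⟨⟨_, h⟩, h'⟩; exact ⟨h', h⟩
    · rintro ⟨h', h⟩; exact ⟨⟨hτ.1.trans_le h', h⟩, h'⟩
  rw [e2, integral_Ico_eq_integral_Ioo, ← integral_Ioc_eq_integral_Ioo,
    ← integral_Ioc_eq_integral_Ioo, ← intervalIntegral.integral_of_le zero_le_one,
    ← intervalIntegral.integral_of_le hτ.2.le, hF, hF]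
  have : Real.exp (-l * 1) = (Real.exp l)⁻¹ := by rw [mul_one, Real.exp_neg]
  have h3 : Real.exp (-l * τ) = (Real.exp (l * τ))⁻¹ := by rw [neg_mul, Real.exp_neg]
  rw [this, h3]
  have := Real.exp_pos (l * τ)
  have := Real.exp_pos l
  simp
  field_simp
  ring

lemma Sr_const {l : ℝ} (hl : 0 < l) (c s : ℝ) : Sr l (fun _ => c) s = c / l := by
  have h0 := exp_sub_one_pos hl
  unfold Sr
  rw [int_gk_formula (by simp) (fract_mem s)]
  have hF : ∀ p q : ℝ, ∫ s in p..q, Real.exp (l * s) * c =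
      (Real.exp (l * q) - Real.exp (l * p)) / l * c := by
    intro p q
    have : ∀ x ∈ uIcc p q, HasDerivAt (fun s => Real.exp (l * s) / l * c)
        (Real.exp (l * x) * c) x := by
      intro x _
      have := ((((hasDerivAt_id x).const_mul l).exp).div_const l).mul_const c
      simp only [id] at this
      refine this.congr_deriv (by field_simp)
    rw [intervalIntegral.integral_eq_sub_of_hasDerivAt this
      (Continuous.intervalIntegrable (by fun_prop) _ _)]
    ring
  rw [hF, hF]
  set σ := Int.fract s
  have h3 : Real.exp (-l * σ) = (Real.exp (l * σ))⁻¹ := by rw [neg_mul, Real.exp_neg]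
  rw [h3]
  have := Real.exp_pos (l * σ)
  simp
  field_simp
  ring

/-- convolution with `a` on nonnegative functions -/
def Te {d : ℕ} (a : (Fin d → ℝ) → ℝ) (g : (Fin d → ℝ) → ℝ≥0∞) (ξ : Fin d → ℝ) : ℝ≥0∞ :=
  ∫⁻ η, ENNReal.ofReal (a (ξ - η)) * g η

lemma Te_mono {d : ℕ} {a : (Fin d → ℝ) → ℝ} {g g' : (Fin d → ℝ) → ℝ≥0∞}
    (h : ∀ᵐ η, g η ≤ g' η) (ξ : Fin d → ℝ) : Te a g ξ ≤ Te a g' ξ := by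
  apply lintegral_mono_ae
  filter_upwards [h] with η hη
  gcongr

lemma Te_meas {d : ℕ} {a : (Fin d → ℝ) → ℝ} (ha : Measurable a) {g : (Fin d → ℝ) → ℝ≥0∞}
    (hg : Measurable g) : Measurable (Te a g) := by
  unfold Te
  apply Measurable.lintegral_prod_right'
    (f := fun p : (Fin d → ℝ) × (Fin d → ℝ) => ENNReal.ofReal (a (p.1 - p.2)) * g p.2)
  fun_prop

lemma Te_iter_meas {d : ℕ} {a : (Fin d → ℝ) → ℝ} (ha : Measurable a) {g : (Fin d → ℝ) → ℝ≥0∞}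
    (hg : Measurable g) (n : ℕ) : Measurable ((Te a)^[n] g) := by
  induction n with
  | zero => simpa
  | succ n ih => rw [Function.iterate_succ_apply']; exact Te_meas ha ih

lemma Te_const_mul {d : ℕ} {a : (Fin d → ℝ) → ℝ} (ha : Measurable a) {g : (Fin d → ℝ) → ℝ≥0∞}
    (hg : Measurable g) (c : ℝ≥0∞) (ξ : Fin d → ℝ) :
    Te a (fun η => c * g η) ξ = c * Te a g ξ := by
  unfold Te
  rw [← lintegral_const_mul _ (by fun_prop)]
  congr 1; ext η; ring

lemma exists_compact_pos {d : ℕ} {a : (Fin d → ℝ) → ℝ} (ha : Measurable a)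
    (hann : ∀ z, 0 ≤ a z) (hmass : ∫ z, a z = 1) :
    ∃ t > 0, ∃ K : Set (Fin d → ℝ), IsCompact K ∧ 0 < volume K ∧ ∀ z ∈ K, t ≤ a z := by
  have h1 : volume (⋃ n : ℕ, {z | 1 / ((n:ℝ) + 1) < a z}) ≠ 0 := by
    intro h0
    have : a =ᵐ[volume] 0 := by
      rw [Filter.EventuallyEq, ae_iff]
      refine measure_mono_null ?_ h0
      intro z hz
      have : 0 < a z := lt_of_le_of_ne (hann z) (Ne.symm hz)
      obtain ⟨n, hn⟩ := exists_nat_one_div_lt this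
      exact mem_iUnion.mpr ⟨n, hn⟩
    rw [integral_congr_ae this] at hmass
    simp at hmass
  obtain ⟨n, hn⟩ := exists_measure_pos_of_not_measure_iUnion_null h1
  have hm : MeasurableSet {z | 1 / ((n:ℝ) + 1) < a z} := measurableSet_lt measurable_const ha
  obtain ⟨K, hK, hKc, hKp⟩ := hm.exists_lt_isCompact hn
  exact ⟨1 / ((n:ℝ) + 1), by positivity, K, hKc, hKp, fun z hz => (hK hz).le⟩

lemma spread_base {d : ℕ} {a : (Fin d → ℝ) → ℝ} (ha : Measurable a)
    (hann : ∀ z, 0 ≤ a z) (hmass : ∫ z, a z = 1) (hsymm : ∀ z, a (-z) = a z) :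
    ∃ δ > 0, ∃ κ : ℝ≥0∞, κ ≠ 0 ∧ ∀ g : (Fin d → ℝ) → ℝ≥0∞, Measurable g → ∀ ξ,
      κ * ∫⁻ η in Metric.ball ξ δ, g η ≤ (Te a)^[2] g ξ := by
  obtain ⟨t, ht, K, hK, hKp, htK⟩ := exists_compact_pos ha hann hmass
  have hKfin : volume K ≠ ∞ := hK.measure_lt_top.ne
  have hK2 : volume K / 2 ≠ 0 := by simp [hKp.ne']
  have hev := eventually_nhds_zero_measure_vadd_sdiff_lt (μ := (volume : Measure (Fin d → ℝ)))
    hK hK.isClosed hK2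
  obtain ⟨δ, hδ, hball⟩ := Metric.eventually_nhds_iff_ball.mp hev
  refine ⟨δ, hδ, ENNReal.ofReal t * ENNReal.ofReal t * (volume K / 2), ?_, ?_⟩
  · simp [ht, hKp.ne']
  intro g hg ξ
  have hinner : ∀ η ∈ Metric.ball ξ δ, ENNReal.ofReal t * ENNReal.ofReal t * (volume K / 2) ≤
      ∫⁻ x, ENNReal.ofReal (a (ξ - x)) * ENNReal.ofReal (a (x - η)) := by
    intro η hη
    have hz : ξ - η ∈ Metric.ball (0 : Fin d → ℝ) δ := by
      rw [Metric.mem_ball, dist_comm, dist_eq_norm] at hη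
      simpa using hη
    have hlt := hball _ hz
    have hvol : volume K / 2 ≤ volume ((ξ +ᵥ K) ∩ (η +ᵥ K)) := by
      have e : (ξ +ᵥ K) ∩ (η +ᵥ K) = η +ᵥ (((ξ - η) +ᵥ K) ∩ K) := by
        rw [Set.vadd_set_inter, vadd_vadd]; simp
      rw [e, measure_vadd]
      have h1 : volume K ≤ volume (((ξ - η) +ᵥ K) ∩ K) + volume (((ξ - η) +ᵥ K) \ K) := by
        rw [measure_inter_add_sdiff _ hK.measurableSet, measure_vadd]
      have h2 : volume K ≤ volume (((ξ - η) +ᵥ K) ∩ K) + volume K / 2 :=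
        h1.trans (by gcongr)
      have h3 : volume K / 2 + volume K / 2 ≤ volume (((ξ - η) +ᵥ K) ∩ K) + volume K / 2 := by
        rwa [ENNReal.add_halves]
      exact (ENNReal.add_le_add_iff_right (ENNReal.div_ne_top hKfin (by simp))).mp h3
    have hmeas : MeasurableSet ((ξ +ᵥ K) ∩ (η +ᵥ K)) :=
      (hK.vadd ξ).measurableSet.inter (hK.vadd η).measurableSet
    calc _ ≤ ENNReal.ofReal t * ENNReal.ofReal t * volume ((ξ +ᵥ K) ∩ (η +ᵥ K)) := by gcongr
      _ = ∫⁻ x in (ξ +ᵥ K) ∩ (η +ᵥ K), ENNReal.ofReal t * ENNReal.ofReal t := by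
        rw [setLIntegral_const]
      _ ≤ ∫⁻ x in (ξ +ᵥ K) ∩ (η +ᵥ K), ENNReal.ofReal (a (ξ - x)) * ENNReal.ofReal (a (x - η)) := by
        apply setLIntegral_mono' hmeas
        intro x hx
        have h1 := mem_vadd_set_iff_neg_vadd_mem.mp hx.1
        have h2 := mem_vadd_set_iff_neg_vadd_mem.mp hx.2
        have h1' : t ≤ a (ξ - x) := by
          rw [← hsymm]; apply htK; convert h1 using 1; simp [sub_eq_neg_add, add_comm]
        have h2' : t ≤ a (x - η) := by
          apply htK; convert h2 using 1; simp [sub_eq_neg_add]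
        gcongr
      _ ≤ _ := setLIntegral_le_lintegral _ _
  have hcomp : (Te a)^[2] g ξ = ∫⁻ η, (∫⁻ x, ENNReal.ofReal (a (ξ - x)) *
      ENNReal.ofReal (a (x - η))) * g η := by
    simp only [Function.iterate_succ_apply', Function.iterate_zero, id]
    unfold Te
    have : ∀ x, ENNReal.ofReal (a (ξ - x)) * ∫⁻ η, ENNReal.ofReal (a (x - η)) * g η =
        ∫⁻ η, ENNReal.ofReal (a (ξ - x)) * (ENNReal.ofReal (a (x - η)) * g η) := by
      intro x; rw [lintegral_const_mul _ (by fun_prop)]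
    simp_rw [this]
    rw [lintegral_lintegral_swap (by fun_prop)]
    congr 1; ext η
    rw [← lintegral_mul_const _ (by fun_prop)]
    congr 1; ext x; ring
  rw [hcomp, ← lintegral_const_mul _ hg]
  calc _ ≤ ∫⁻ η in Metric.ball ξ δ, (∫⁻ x, ENNReal.ofReal (a (ξ - x)) *
      ENNReal.ofReal (a (x - η))) * g η := by
        apply setLIntegral_mono' measurableSet_ball
        intro η hη
        gcongr
        exact hinner η hη
    _ ≤ _ := setLIntegral_le_lintegral _ _

lemma ball_inter_vol {d : ℕ} {δ r : ℝ} (hδ : 0 < δ) (hr : δ ≤ r) (ξ η : Fin d → ℝ)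
    (h : η ∈ Metric.ball ξ (r + δ / 2)) :
    volume (Metric.ball (0 : Fin d → ℝ) (δ / 4)) ≤
      volume (Metric.ball ξ δ ∩ Metric.ball η r) := by
  set t := (3 * δ / 4) / (r + δ / 2) with ht
  have hpos : 0 < r + δ / 2 := by linarith
  have htp : 0 ≤ t := by positivity
  have htm : t * (r + δ / 2) = 3 * δ / 4 := by rw [ht]; exact div_mul_cancel₀ _ hpos.ne'
  have ht1 : t ≤ 1 := by rw [ht, div_le_one hpos]; linarith
  set p := ξ + t • (η - ξ) with hp
  rw [← Measure.addHaar_ball_center volume p]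
  apply measure_mono
  have hn : ‖η - ξ‖ < r + δ / 2 := by rwa [Metric.mem_ball, dist_eq_norm] at h
  have d1 : dist p ξ ≤ 3 * δ / 4 := by
    rw [dist_eq_norm, hp, add_sub_cancel_left, norm_smul, Real.norm_of_nonneg htp]
    calc t * ‖η - ξ‖ ≤ t * (r + δ / 2) := by gcongr
      _ = _ := htm
  have d2 : dist p η ≤ r - δ / 4 := by
    have : p - η = -((1 - t) • (η - ξ)) := by rw [hp]; module
    rw [dist_eq_norm, this, norm_neg, norm_smul, Real.norm_of_nonneg (by linarith)]
    calc (1 - t) * ‖η - ξ‖ ≤ (1 - t) * (r + δ / 2) := by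
          apply mul_le_mul_of_nonneg_left hn.le; linarith
      _ = _ := by linarith
  intro x hx
  rw [Metric.mem_ball] at hx
  constructor
  · rw [Metric.mem_ball]
    have := dist_triangle x p ξ
    linarith
  · rw [Metric.mem_ball]
    have := dist_triangle x p η
    linarith

/-- spreading property at radius `r` -/
def Spread {d : ℕ} (a : (Fin d → ℝ) → ℝ) (r : ℝ) : Prop :=
  ∃ n : ℕ, 1 ≤ n ∧ ∃ κ : ℝ≥0∞, κ ≠ 0 ∧ ∀ g : (Fin d → ℝ) → ℝ≥0∞, Measurable g → ∀ ξ,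
      κ * ∫⁻ η in Metric.ball ξ r, g η ≤ (Te a)^[n] g ξ

lemma spread_step {d : ℕ} {a : (Fin d → ℝ) → ℝ} (ha : Measurable a) {δ r : ℝ} (hδ : 0 < δ)
    (hr : δ ≤ r) {κ : ℝ≥0∞} (hκ : κ ≠ 0)
    (hbase : ∀ g : (Fin d → ℝ) → ℝ≥0∞, Measurable g → ∀ ξ,
      κ * ∫⁻ η in Metric.ball ξ δ, g η ≤ (Te a)^[2] g ξ)
    (hS : Spread a r) : Spread a (r + δ / 2) := by
  obtain ⟨n, hn, c, hc, hS⟩ := hS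
  refine ⟨2 + n, by omega, κ * c * volume (Metric.ball (0 : Fin d → ℝ) (δ / 4)), ?_, ?_⟩
  · have := (Metric.measure_ball_pos (volume : Measure (Fin d → ℝ)) 0
      (by positivity : 0 < δ / 4)).ne'
    simp only [ne_eq, mul_eq_zero, not_or]
    exact ⟨⟨hκ, hc⟩, this⟩
  intro g hg ξ
  rw [Function.iterate_add_apply]
  refine le_trans ?_ (hbase _ (Te_iter_meas ha hg n) ξ)
  rw [mul_assoc, mul_assoc]
  gcongr κ * ?_
  have hm1 : Measurable (fun p : (Fin d → ℝ) × (Fin d → ℝ) =>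
      (Metric.ball (0 : Fin d → ℝ) r).indicator (fun _ => (1:ℝ≥0∞)) (p.1 - p.2) * g p.2) := by
    apply Measurable.mul _ (by fun_prop)
    exact (measurable_const.indicator measurableSet_ball).comp (by fun_prop)
  have e0 : ∀ x, ∫⁻ η in Metric.ball x r, g η = ∫⁻ η,
      (Metric.ball (0 : Fin d → ℝ) r).indicator (fun _ => (1:ℝ≥0∞)) (x - η) * g η := by
    intro x
    rw [← lintegral_indicator measurableSet_ball]
    congr 1; ext η
    by_cases h : η ∈ Metric.ball x r
    · have h' : x - η ∈ Metric.ball (0 : Fin d → ℝ) r := by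
        rw [Metric.mem_ball, dist_comm, dist_eq_norm] at h; simpa using h
      rw [indicator_of_mem h, indicator_of_mem h', one_mul]
    · have h' : x - η ∉ Metric.ball (0 : Fin d → ℝ) r := by
        rw [Metric.mem_ball, dist_comm, dist_eq_norm] at h; simpa using h
      rw [indicator_of_notMem h, indicator_of_notMem h', zero_mul]
  calc c * (volume (Metric.ball (0 : Fin d → ℝ) (δ / 4)) *
        ∫⁻ η in Metric.ball ξ (r + δ / 2), g η)
      = c * ∫⁻ η in Metric.ball ξ (r + δ / 2),
        volume (Metric.ball (0 : Fin d → ℝ) (δ / 4)) * g η := by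
        rw [lintegral_const_mul _ hg]
    _ ≤ c * ∫⁻ η in Metric.ball ξ (r + δ / 2),
        volume (Metric.ball ξ δ ∩ Metric.ball η r) * g η := by
        gcongr c * ?_
        apply setLIntegral_mono' measurableSet_ball
        intro η hη
        exact mul_le_mul_left (ball_inter_vol hδ hr ξ η hη) _
    _ ≤ c * ∫⁻ η, volume (Metric.ball ξ δ ∩ Metric.ball η r) * g η := by
        gcongr c * ?_
        exact setLIntegral_le_lintegral _ _
    _ = c * ∫⁻ η, ∫⁻ x in Metric.ball ξ δ,
        (Metric.ball (0 : Fin d → ℝ) r).indicator (fun _ => (1:ℝ≥0∞)) (x - η) * g η := by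
        congr 2; ext η
        have : ∀ x, (Metric.ball (0 : Fin d → ℝ) r).indicator (fun _ => (1:ℝ≥0∞)) (x - η) =
            (Metric.ball η r).indicator (fun _ => (1:ℝ≥0∞)) x := by
          intro x
          simp only [indicator, Metric.mem_ball, dist_eq_norm, sub_zero]
        simp_rw [this]
        rw [lintegral_mul_const _ (measurable_const.indicator measurableSet_ball)]
        congr 1
        rw [lintegral_indicator_const measurableSet_ball,
          Measure.restrict_apply measurableSet_ball, one_mul, inter_comm]
    _ = c * ∫⁻ x in Metric.ball ξ δ, ∫⁻ η in Metric.ball x r, g η := by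
        rw [lintegral_lintegral_swap]
        · simp_rw [e0]
        · exact (hm1.comp measurable_swap).aemeasurable
    _ = ∫⁻ x in Metric.ball ξ δ, c * ∫⁻ η in Metric.ball x r, g η := by
        rw [lintegral_const_mul]
        simp_rw [e0]
        exact hm1.lintegral_prod_right'
    _ ≤ _ := by
        apply lintegral_mono
        intro x
        exact hS g hg x

lemma spread_cube {d : ℕ} {a : (Fin d → ℝ) → ℝ} (ha : Measurable a)
    (hann : ∀ z, 0 ≤ a z) (hmass : ∫ z, a z = 1) (hsymm : ∀ z, a (-z) = a z) :
    ∃ n : ℕ, 1 ≤ n ∧ ∃ ε : ℝ, 0 < ε ∧ ∀ g : (Fin d → ℝ) → ℝ≥0∞, Measurable g → SPer g → ∀ ξ,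
      ENNReal.ofReal ε * ∫⁻ η in cube d, g η ≤ (Te a)^[n] g ξ := by
  obtain ⟨δ, hδ, κ, hκ, hbase⟩ := spread_base ha hann hmass hsymm
  have hall : ∀ m : ℕ, Spread a (δ + m * (δ / 2)) := by
    intro m
    induction m with
    | zero =>
      have h0 : Spread a δ := ⟨2, by norm_num, κ, hκ, hbase⟩
      simpa using h0
    | succ m ih =>
      have := spread_step ha hδ (by nlinarith [(Nat.cast_nonneg m : (0:ℝ) ≤ m)]) hκ hbase ih
      convert this using 1
      push_cast; ring
  obtain ⟨m, hm⟩ := exists_nat_gt (2 / (δ / 2))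
  have hm2 : 2 < δ + m * (δ / 2) := by
    rw [div_lt_iff₀ (by positivity)] at hm; linarith
  obtain ⟨n, hn, c, hc, hS⟩ := hall m
  have hc1 : min c 1 ≠ ∞ := (min_le_right c 1).trans_lt ENNReal.one_lt_top |>.ne
  have hc0 : min c 1 ≠ 0 := by simp [hc]
  refine ⟨n, hn, (min c 1).toReal, ENNReal.toReal_pos hc0 hc1, fun g hg hper ξ => ?_⟩
  rw [ENNReal.ofReal_toReal hc1]
  refine le_trans ?_ (hS g hg ξ)
  rw [← hper.setLIntegral_add ξ, setLIntegral_shift]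
  refine mul_le_mul' (min_le_left _ _) (lintegral_mono_set ?_)
  intro x hx
  obtain ⟨y, hy, rfl⟩ := mem_vadd_set.mp hx
  rw [Metric.mem_ball, dist_eq_norm, vadd_eq_add, add_sub_cancel_left]
  refine lt_of_le_of_lt ?_ hm2
  rw [pi_norm_le_iff_of_nonneg (by norm_num)]
  intro i
  have := hy i (mem_univ i)
  rw [Real.norm_of_nonneg this.1]
  linarith [this.2]

/-- standing hypotheses -/
structure Setup {d : ℕ} (a : (Fin d → ℝ) → ℝ) (μ : (Fin d → ℝ) → (Fin d → ℝ) → ℝ → ℝ)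
    (μm μp : ℝ) : Prop where
  ameas : Measurable a
  ann : ∀ z, 0 ≤ a z
  aint : Integrable a
  amass : ∫ z, a z = 1
  amom : Integrable (fun z => ‖z‖ ^ 2 * a z)
  asymm : ∀ z, a (-z) = a z
  mmeas : Measurable fun p : (Fin d → ℝ) × (Fin d → ℝ) × ℝ => μ p.1 p.2.1 p.2.2
  per1 : ∀ ξ η s, ∀ k : Fin d → ℤ, μ (ξ + fun i => (k i : ℝ)) η s = μ ξ η s
  per2 : ∀ ξ η s, ∀ k : Fin d → ℤ, μ ξ (η + fun i => (k i : ℝ)) s = μ ξ η s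
  per3 : ∀ ξ η s, μ ξ η (s + 1) = μ ξ η s
  msymm : ∀ ξ η s, μ ξ η s = μ η ξ s
  mpos : 0 < μm
  mlb : ∀ ξ η s, μm ≤ μ ξ η s
  mub : ∀ ξ η s, μ ξ η s ≤ μp

section
variable {d : ℕ} {a : (Fin d → ℝ) → ℝ} {μ : (Fin d → ℝ) → (Fin d → ℝ) → ℝ → ℝ} {μm μp : ℝ}

lemma Setup.ppos (H : Setup a μ μm μp) : 0 < μp :=
  H.mpos.trans_le ((H.mlb 0 0 0).trans (H.mub 0 0 0))

lemma Setup.mnn (H : Setup a μ μm μp) (ξ η s) : 0 ≤ μ ξ η s := H.mpos.le.trans (H.mlb ξ η s)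

lemma Setup.mmeas' (H : Setup a μ μm μp) {Z : Type*} [MeasurableSpace Z] {f g : Z → (Fin d → ℝ)}
    {h : Z → ℝ} (hf : Measurable f) (hg : Measurable g) (hh : Measurable h) :
    Measurable (fun z => μ (f z) (g z) (h z)) :=
  H.mmeas.comp (hf.prodMk (hg.prodMk hh))

lemma lswap {k : (Fin d → ℝ) → (Fin d → ℝ) → ℝ≥0∞}
    (hk : Measurable (fun p : (Fin d → ℝ) × (Fin d → ℝ) => k p.1 p.2))
    (hper : ∀ ξ η, ∀ n : Fin d → ℤ, k (ξ + fun i => (n i : ℝ)) (η + fun i => (n i : ℝ)) = k ξ η) :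
    ∫⁻ ξ in cube d, ∫⁻ η, k ξ η = ∫⁻ ξ in cube d, ∫⁻ η, k η ξ := by
  have e1 : ∀ ξ, ∫⁻ η, k ξ η = ∫⁻ z, k ξ (ξ + z) := fun ξ =>
    (lintegral_add_left_eq_self (fun η => k ξ η) ξ).symm
  have e2 : ∀ ξ, ∫⁻ η, k η ξ = ∫⁻ z, k (ξ - z) ξ := fun ξ =>
    (lintegral_sub_left_eq_self (fun η => k η ξ) ξ).symm
  simp_rw [e1, e2]
  have s1 : ∫⁻ ξ in cube d, ∫⁻ z, k ξ (ξ + z) = ∫⁻ z, ∫⁻ ξ in cube d, k ξ (ξ + z) :=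
    lintegral_lintegral_swap (hk.comp (f := fun p : (Fin d → ℝ) × (Fin d → ℝ) =>
      (p.1, p.1 + p.2)) (by fun_prop)).aemeasurable
  have s2 : ∫⁻ ξ in cube d, ∫⁻ z, k (ξ - z) ξ = ∫⁻ z, ∫⁻ ξ in cube d, k (ξ - z) ξ :=
    lintegral_lintegral_swap (hk.comp (f := fun p : (Fin d → ℝ) × (Fin d → ℝ) =>
      (p.1 - p.2, p.1)) (by fun_prop)).aemeasurable
  rw [s1, s2]
  congr 1; ext z
  have hg : SPer (fun ξ => k (ξ - z) ξ) := by
    intro ξ n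
    have : ξ + (fun i => (n i : ℝ)) - z = (ξ - z) + fun i => (n i : ℝ) := by abel
    simp only [this, hper]
  have := hg.setLIntegral_add z
  simpa using this

/-- `A + μp` on nonnegative functions -/
def Be (a : (Fin d → ℝ) → ℝ) (μ : (Fin d → ℝ) → (Fin d → ℝ) → ℝ → ℝ) (μp : ℝ)
    (W : (Fin d → ℝ) → ℝ → ℝ≥0∞) (ξ : Fin d → ℝ) (τ : ℝ) : ℝ≥0∞ :=
  ∫⁻ η, ENNReal.ofReal (a (ξ - η)) * (ENNReal.ofReal (μ ξ η τ) * W η τ +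
    ENNReal.ofReal (μp - μ ξ η τ) * W ξ τ)

/-- periodic resolvent on nonnegative functions -/
def Se (l : ℝ) (h : ℝ → ℝ≥0∞) (s : ℝ) : ℝ≥0∞ :=
  ∫⁻ τ in Ioo (0:ℝ) 1, ENNReal.ofReal (gk l (Int.fract s) τ) * h τ

/-- the Markov operator on nonnegative functions -/
def Pe (a : (Fin d → ℝ) → ℝ) (μ : (Fin d → ℝ) → (Fin d → ℝ) → ℝ → ℝ) (μp : ℝ)
    (W : (Fin d → ℝ) → ℝ → ℝ≥0∞) (ξ : Fin d → ℝ) (s : ℝ) : ℝ≥0∞ :=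
  Se μp (Be a μ μp W ξ) s

lemma Setup.lmass (H : Setup a μ μm μp) (ξ : Fin d → ℝ) :
    ∫⁻ η, ENNReal.ofReal (a (ξ - η)) = 1 := by
  rw [lintegral_sub_left_eq_self (fun η => ENNReal.ofReal (a η)) ξ,
    ← ofReal_integral_eq_lintegral_ofReal H.aint (Filter.Eventually.of_forall H.ann), H.amass]
  simp

lemma Setup.Be_meas (H : Setup a μ μm μp) {W : (Fin d → ℝ) → ℝ → ℝ≥0∞}
    (hW : Measurable (fun p : (Fin d → ℝ) × ℝ => W p.1 p.2)) :
    Measurable (fun p : (Fin d → ℝ) × ℝ => Be a μ μp W p.1 p.2) := by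
  unfold Be
  apply Measurable.lintegral_prod_right'
    (f := fun q : ((Fin d → ℝ) × ℝ) × (Fin d → ℝ) => ENNReal.ofReal (a (q.1.1 - q.2)) *
      (ENNReal.ofReal (μ q.1.1 q.2 q.1.2) * W q.2 q.1.2 +
    ENNReal.ofReal (μp - μ q.1.1 q.2 q.1.2) * W q.1.1 q.1.2))
  have h1 := H.ameas
  have h2 : Measurable (fun q : ((Fin d → ℝ) × ℝ) × (Fin d → ℝ) => μ q.1.1 q.2 q.1.2) :=
    H.mmeas' (by fun_prop) (by fun_prop) (by fun_prop)
  have h3 : Measurable (fun q : ((Fin d → ℝ) × ℝ) × (Fin d → ℝ) => W q.2 q.1.2) :=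
    hW.comp (f := fun q : ((Fin d → ℝ) × ℝ) × (Fin d → ℝ) => (q.2, q.1.2)) (by fun_prop)
  have h4 : Measurable (fun q : ((Fin d → ℝ) × ℝ) × (Fin d → ℝ) => W q.1.1 q.1.2) :=
    hW.comp (f := fun q : ((Fin d → ℝ) × ℝ) × (Fin d → ℝ) => (q.1.1, q.1.2)) (by fun_prop)
  exact (h1.comp (by fun_prop)).ennreal_ofReal.mul ((h2.ennreal_ofReal.mul h3).add
    ((h2.const_sub μp).ennreal_ofReal.mul h4))

lemma Setup.Be_cons (H : Setup a μ μm μp) {W : (Fin d → ℝ) → ℝ → ℝ≥0∞}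
    (hW : Measurable (fun p : (Fin d → ℝ) × ℝ => W p.1 p.2))
    (τ : ℝ) (hper : SPer (fun ξ => W ξ τ)) :
    ∫⁻ ξ in cube d, Be a μ μp W ξ τ = ENNReal.ofReal μp * ∫⁻ ξ in cube d, W ξ τ := by
  have h1 := H.ameas
  have hWm : Measurable (fun ξ => W ξ τ) := hW.comp (by fun_prop : Measurable fun ξ => (ξ, τ))
  have h2 : Measurable (fun q : (Fin d → ℝ) × (Fin d → ℝ) => μ q.1 q.2 τ) :=
    H.mmeas' (by fun_prop) (by fun_prop) (by fun_prop)
  have h2' : ∀ ξ, Measurable (fun η => μ ξ η τ) := fun ξ =>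
    H.mmeas' (by fun_prop) (by fun_prop) (by fun_prop)
  have e1 : ∀ ξ, Be a μ μp W ξ τ =
      (∫⁻ η, ENNReal.ofReal (a (ξ - η)) * ENNReal.ofReal (μ ξ η τ) * W η τ) +
      ∫⁻ η, ENNReal.ofReal (a (ξ - η)) * ENNReal.ofReal (μp - μ ξ η τ) * W ξ τ := by
    intro ξ
    have := h2' ξ
    unfold Be
    rw [← lintegral_add_left (by fun_prop)]
    congr 1; ext η; ring
  have mk : Measurable (fun q : (Fin d → ℝ) × (Fin d → ℝ) =>
      ENNReal.ofReal (a (q.1 - q.2)) * ENNReal.ofReal (μ q.1 q.2 τ) * W q.2 τ) := by fun_prop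
  have mk' : Measurable (fun q : (Fin d → ℝ) × (Fin d → ℝ) =>
      ENNReal.ofReal (a (q.1 - q.2)) * ENNReal.ofReal (μ q.1 q.2 τ) * W q.1 τ) := by fun_prop
  simp_rw [e1]
  rw [lintegral_add_left mk.lintegral_prod_right']
  rw [lswap (k := fun ξ η => ENNReal.ofReal (a (ξ - η)) * ENNReal.ofReal (μ ξ η τ) * W η τ) mk]
  swap
  · intro ξ η n
    have := hper η n
    simp only [add_sub_add_right_eq_sub, H.per1, H.per2, this] at *
  have e2 : ∀ ξ η, ENNReal.ofReal (a (η - ξ)) * ENNReal.ofReal (μ η ξ τ) * W ξ τ =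
      ENNReal.ofReal (a (ξ - η)) * ENNReal.ofReal (μ ξ η τ) * W ξ τ := by
    intro ξ η
    rw [← H.asymm (η - ξ), neg_sub, H.msymm η ξ]
  simp_rw [e2]
  rw [← lintegral_add_left mk'.lintegral_prod_right', ← lintegral_const_mul _ hWm]
  congr 1; ext ξ
  have := h2' ξ
  rw [← lintegral_add_left (by fun_prop)]
  have e3 : ∀ η, ENNReal.ofReal (a (ξ - η)) * ENNReal.ofReal (μ ξ η τ) * W ξ τ +
      ENNReal.ofReal (a (ξ - η)) * ENNReal.ofReal (μp - μ ξ η τ) * W ξ τ =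
      ENNReal.ofReal (a (ξ - η)) * (ENNReal.ofReal μp * W ξ τ) := by
    intro η
    have : ENNReal.ofReal μp = ENNReal.ofReal (μ ξ η τ) + ENNReal.ofReal (μp - μ ξ η τ) := by
      rw [← ENNReal.ofReal_add (H.mnn _ _ _) (by linarith [H.mub ξ η τ])]; congr 1; ring
    rw [this]; ring
  simp_rw [e3]
  rw [lintegral_mul_const _ (by fun_prop), H.lmass, one_mul]

lemma Se_meas_uncurry (l : ℝ) {h : (Fin d → ℝ) → ℝ → ℝ≥0∞}
    (hh : Measurable (fun p : (Fin d → ℝ) × ℝ => h p.1 p.2)) :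
    Measurable (fun p : (Fin d → ℝ) × ℝ => Se l (h p.1) p.2) := by
  unfold Se
  apply Measurable.lintegral_prod_right'
    (f := fun q : ((Fin d → ℝ) × ℝ) × ℝ => ENNReal.ofReal (gk l (Int.fract q.1.2) q.2) * h q.1.1 q.2)
  have h1 : Measurable (fun q : ((Fin d → ℝ) × ℝ) × ℝ => gk l (Int.fract q.1.2) q.2) :=
    (gk_meas l).comp (f := fun q : ((Fin d → ℝ) × ℝ) × ℝ => (Int.fract q.1.2, q.2)) (by fun_prop)
  have h2 : Measurable (fun q : ((Fin d → ℝ) × ℝ) × ℝ => h q.1.1 q.2) :=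
    hh.comp (f := fun q : ((Fin d → ℝ) × ℝ) × ℝ => (q.1.1, q.2)) (by fun_prop)
  fun_prop

lemma Se_cons {l : ℝ} (hl : 0 < l) {h : ℝ → ℝ≥0∞} (hh : Measurable h) :
    ∫⁻ s in Ioo (0:ℝ) 1, Se l h s = ENNReal.ofReal (1 / l) * ∫⁻ τ in Ioo (0:ℝ) 1, h τ := by
  have hm : Measurable (fun p : ℝ × ℝ => gk l p.1 p.2) := gk_meas l
  calc ∫⁻ s in Ioo (0:ℝ) 1, Se l h s
      = ∫⁻ s in Ioo (0:ℝ) 1, ∫⁻ τ in Ioo (0:ℝ) 1, ENNReal.ofReal (gk l s τ) * h τ := by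
        apply setLIntegral_congr_fun measurableSet_Ioo
        intro s hs
        simp only [Se]
        rw [Int.fract_eq_self.mpr ⟨hs.1.le, hs.2⟩]
    _ = ∫⁻ τ in Ioo (0:ℝ) 1, ∫⁻ s in Ioo (0:ℝ) 1, ENNReal.ofReal (gk l s τ) * h τ := by
        rw [lintegral_lintegral_swap]
        apply Measurable.aemeasurable
        simp only [Function.uncurry_def]
        fun_prop
    _ = ∫⁻ τ in Ioo (0:ℝ) 1, ENNReal.ofReal (1 / l) * h τ := by
        apply setLIntegral_congr_fun measurableSet_Ioo
        intro τ hτ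
        simp only
        have hmm : Measurable (fun s => ENNReal.ofReal (gk l s τ)) :=
          (hm.comp (by fun_prop : Measurable fun s : ℝ => (s, τ))).ennreal_ofReal
        rw [lintegral_mul_const _ hmm, lint_gk hl hτ]
    _ = _ := lintegral_const_mul _ hh

lemma Setup.Pe_meas (H : Setup a μ μm μp) {W : (Fin d → ℝ) → ℝ → ℝ≥0∞}
    (hW : Measurable (fun p : (Fin d → ℝ) × ℝ => W p.1 p.2)) :
    Measurable (fun p : (Fin d → ℝ) × ℝ => Pe a μ μp W p.1 p.2) :=
  Se_meas_uncurry μp (H.Be_meas hW)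

lemma curry_meas {Y : Type*} [MeasurableSpace Y] {h : (Fin d → ℝ) → ℝ → Y}
    (hh : Measurable (fun p : (Fin d → ℝ) × ℝ => h p.1 p.2)) (ξ) : Measurable (h ξ) :=
  hh.comp (by fun_prop : Measurable fun s : ℝ => (ξ, s))

lemma SeBe_cons {l : ℝ} (hl : 0 < l) {h : (Fin d → ℝ) → ℝ → ℝ≥0∞}
    (hh : Measurable (fun p : (Fin d → ℝ) × ℝ => h p.1 p.2)) :
    ∫⁻ ξ in cube d, ∫⁻ s in Ioo (0:ℝ) 1, Se l (h ξ) s =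
      ENNReal.ofReal (1 / l) * ∫⁻ ξ in cube d, ∫⁻ s in Ioo (0:ℝ) 1, h ξ s := by
  simp_rw [fun ξ => Se_cons hl (curry_meas hh ξ)]
  rw [lintegral_const_mul _ hh.lintegral_prod_right']

lemma Setup.Pe_cons (H : Setup a μ μm μp) {W : (Fin d → ℝ) → ℝ → ℝ≥0∞}
    (hW : Measurable (fun p : (Fin d → ℝ) × ℝ => W p.1 p.2))
    (hper : ∀ τ, SPer (fun ξ => W ξ τ)) :
    ∫⁻ ξ in cube d, ∫⁻ s in Ioo (0:ℝ) 1, Pe a μ μp W ξ s =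
      ∫⁻ ξ in cube d, ∫⁻ s in Ioo (0:ℝ) 1, W ξ s := by
  have hB := H.Be_meas hW
  unfold Pe
  rw [SeBe_cons H.ppos hB, lintegral_lintegral_swap hB.aemeasurable]
  simp_rw [fun τ => H.Be_cons hW τ (hper τ)]
  have hsw : Measurable (fun τ => ∫⁻ ξ in cube d, W ξ τ) :=
    (hW.comp measurable_swap).lintegral_prod_right'
  rw [lintegral_const_mul _ hsw, ← mul_assoc,
    ← ENNReal.ofReal_mul (by have := H.ppos; positivity), one_div,
    inv_mul_cancel₀ H.ppos.ne', ENNReal.ofReal_one, one_mul,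
    lintegral_lintegral_swap hW.aemeasurable]

/-- the Doeblin constant -/
def c1 (μm μp : ℝ) : ℝ := Real.exp (-μp) / (Real.exp μp - 1) * μm

lemma Setup.c1_pos (H : Setup a μ μm μp) : 0 < c1 μm μp := by
  have := exp_sub_one_pos H.ppos
  have := H.mpos
  unfold c1; positivity

lemma Setup.Pe_lower (H : Setup a μ μm μp) {W : (Fin d → ℝ) → ℝ → ℝ≥0∞}
    (hW : Measurable (fun p : (Fin d → ℝ) × ℝ => W p.1 p.2)) (ξ : Fin d → ℝ) (s : ℝ) :
    ENNReal.ofReal (c1 μm μp) * Te a (fun η => ∫⁻ τ in Ioo (0:ℝ) 1, W η τ) ξ ≤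
      Pe a μ μp W ξ s := by
  have hl := H.ppos
  have h1 := H.ameas
  have h0 := exp_sub_one_pos hl
  have hm : Measurable (fun q : ℝ × (Fin d → ℝ) => W q.2 q.1) := hW.comp measurable_swap
  have hB : ∀ τ, ENNReal.ofReal μm * ∫⁻ η, ENNReal.ofReal (a (ξ - η)) * W η τ ≤
      Be a μ μp W ξ τ := by
    intro τ
    have hm' : Measurable (fun η => W η τ) := hW.comp (by fun_prop : Measurable fun η => (η, τ))
    rw [← lintegral_const_mul _ (by fun_prop)]
    apply lintegral_mono
    intro η
    calc _ = ENNReal.ofReal (a (ξ - η)) * (ENNReal.ofReal μm * W η τ + 0) := by ring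
      _ ≤ _ := mul_le_mul' le_rfl (add_le_add (mul_le_mul'
        (ENNReal.ofReal_le_ofReal (H.mlb _ _ _)) le_rfl) zero_le)
  have e1 : Te a (fun η => ∫⁻ τ in Ioo (0:ℝ) 1, W η τ) ξ =
      ∫⁻ τ in Ioo (0:ℝ) 1, ∫⁻ η, ENNReal.ofReal (a (ξ - η)) * W η τ := by
    unfold Te
    rw [lintegral_lintegral_swap]
    · congr 1; ext η; rw [lintegral_const_mul _ (curry_meas hW η)]
    · apply Measurable.aemeasurable
      simp only [Function.uncurry_def]
      fun_prop
  have hmm : Measurable (fun τ => ∫⁻ η, ENNReal.ofReal (a (ξ - η)) * W η τ) := by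
    apply Measurable.lintegral_prod_right'
      (f := fun q : ℝ × (Fin d → ℝ) => ENNReal.ofReal (a (ξ - q.2)) * W q.2 q.1)
    fun_prop
  rw [e1, ← lintegral_const_mul _ hmm]
  unfold Pe Se c1
  apply setLIntegral_mono' measurableSet_Ioo
  intro τ hτ
  rw [ENNReal.ofReal_mul (by positivity), mul_assoc]
  refine mul_le_mul' (ENNReal.ofReal_le_ofReal (gk_lower hl (fract_mem s) hτ)) (hB τ)

end

section
variable {d : ℕ} {a : (Fin d → ℝ) → ℝ} {μ : (Fin d → ℝ) → (Fin d → ℝ) → ℝ → ℝ} {μm μp : ℝ}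

lemma ofReal_int_le {X : Type*} [MeasurableSpace X] {ν : Measure X} (g : X → ℝ) :
    ENNReal.ofReal (∫ x, g x ∂ν) ≤ ∫⁻ x, ENNReal.ofReal (g x) ∂ν := by
  by_cases hg : Integrable g ν
  · rw [integral_eq_lintegral_pos_part_sub_lintegral_neg_part hg]
    refine (ENNReal.ofReal_le_ofReal (sub_le_self _ ENNReal.toReal_nonneg)).trans
      ENNReal.ofReal_toReal_le
  · rw [integral_undef hg]; simp

/-- bounded, measurable, periodic functions -/
structure Nice (R : ℝ) (f : (Fin d → ℝ) → ℝ → ℝ) : Prop where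
  meas : Measurable (fun p : (Fin d → ℝ) × ℝ => f p.1 p.2)
  per : ∀ ξ s, ∀ k : Fin d → ℤ, f (ξ + fun i => (k i : ℝ)) s = f ξ s
  tper : ∀ ξ s, f ξ (s + 1) = f ξ s
  bd : ∀ ξ s, |f ξ s| ≤ R

lemma Nice.mono {R R' : ℝ} {f : (Fin d → ℝ) → ℝ → ℝ} (h : Nice R f) (hR : R ≤ R') : Nice R' f :=
  ⟨h.meas, h.per, h.tper, fun ξ s => (h.bd ξ s).trans hR⟩

lemma Nice.R_nn {R : ℝ} {f : (Fin d → ℝ) → ℝ → ℝ} (h : Nice R f) : 0 ≤ R :=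
  (abs_nonneg _).trans (h.bd 0 0)

lemma Nice.affine {R : ℝ} {f : (Fin d → ℝ) → ℝ → ℝ} (h : Nice R f) (c e : ℝ) :
    Nice (|c| + |e| * R) (fun ξ s => c + e * f ξ s) where
  meas := (h.meas.const_mul e).const_add c
  per ξ s k := by simp only [h.per]
  tper ξ s := by simp only [h.tper]
  bd ξ s := by
    refine (abs_add_le _ _).trans ?_
    rw [abs_mul]
    have := h.bd ξ s
    gcongr

lemma Nice.add {R R' : ℝ} {f g : (Fin d → ℝ) → ℝ → ℝ} (h : Nice R f) (h' : Nice R' g) :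
    Nice (R + R') (fun ξ s => f ξ s + g ξ s) where
  meas := h.meas.add h'.meas
  per ξ s k := by simp only [h.per, h'.per]
  tper ξ s := by simp only [h.tper, h'.tper]
  bd ξ s := (abs_add_le _ _).trans (add_le_add (h.bd ξ s) (h'.bd ξ s))

lemma Nice.meas1 {R : ℝ} {f : (Fin d → ℝ) → ℝ → ℝ} (h : Nice R f) (s : ℝ) :
    Measurable (fun ξ => f ξ s) := h.meas.comp (by fun_prop : Measurable fun ξ => (ξ, s))

/-- `A + μp` on real functions -/
def Br (a : (Fin d → ℝ) → ℝ) (μ : (Fin d → ℝ) → (Fin d → ℝ) → ℝ → ℝ) (μp : ℝ)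
    (f : (Fin d → ℝ) → ℝ → ℝ) (ξ : Fin d → ℝ) (τ : ℝ) : ℝ :=
  ∫ η, a (ξ - η) * (μ ξ η τ * f η τ + (μp - μ ξ η τ) * f ξ τ)

/-- the Markov operator on real functions -/
def Pr (a : (Fin d → ℝ) → ℝ) (μ : (Fin d → ℝ) → (Fin d → ℝ) → ℝ → ℝ) (μp : ℝ)
    (f : (Fin d → ℝ) → ℝ → ℝ) (ξ : Fin d → ℝ) (s : ℝ) : ℝ :=
  Sr μp (Br a μ μp f ξ) s

lemma Setup.aint' (H : Setup a μ μm μp) (ξ) : Integrable (fun η => a (ξ - η)) :=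
  H.aint.comp_sub_left ξ

lemma Setup.amass' (H : Setup a μ μm μp) (ξ) : ∫ η, a (ξ - η) = 1 := by
  rw [integral_sub_left_eq_self (fun η => a η)]; exact H.amass

lemma Setup.mu_mul_int (H : Setup a μ μm μp) {g : (Fin d → ℝ) → ℝ} (hg : Integrable g) (ξ τ) :
    Integrable (fun η => μ ξ η τ * g η) := by
  refine hg.bdd_mul (c := μp) ?_ ?_
  · exact (H.mmeas' (by fun_prop) (by fun_prop) (by fun_prop)).aestronglyMeasurable
  · refine Filter.Eventually.of_forall fun η => ?_
    rw [Real.norm_eq_abs, abs_of_nonneg (H.mnn _ _ _)]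
    exact H.mub _ _ _

lemma Setup.Br_int (H : Setup a μ μm μp) {f : (Fin d → ℝ) → ℝ → ℝ} {ξ : Fin d → ℝ} {τ : ℝ}
    (hInt : Integrable (fun η => a (ξ - η) * f η τ)) :
    Integrable (fun η => a (ξ - η) * (μ ξ η τ * f η τ + (μp - μ ξ η τ) * f ξ τ)) := by
  have h1 := H.mu_mul_int hInt ξ τ
  have h2 := (H.mu_mul_int (H.aint' ξ) ξ τ).mul_const (f ξ τ)
  have h3 := (H.aint' ξ).mul_const (μp * f ξ τ)
  refine ((h1.add h3).sub h2).congr (Filter.Eventually.of_forall fun η => ?_)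
  simp only [Pi.add_apply, Pi.sub_apply]; ring

lemma Setup.Br_eq (H : Setup a μ μm μp) {f : (Fin d → ℝ) → ℝ → ℝ} {ξ : Fin d → ℝ} {τ : ℝ}
    (hInt : Integrable (fun η => a (ξ - η) * f η τ)) :
    Aop a μ τ (fun η => f η τ) ξ + μp * f ξ τ = Br a μ μp f ξ τ := by
  have h1 := H.mu_mul_int hInt ξ τ
  have h2 := (H.mu_mul_int (H.aint' ξ) ξ τ).mul_const (f ξ τ)
  have h3 := (H.aint' ξ).mul_const (μp * f ξ τ)
  have e3 : ∫ η, a (ξ - η) * (μp * f ξ τ) = μp * f ξ τ := by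
    rw [integral_mul_const, H.amass' ξ, one_mul]
  have h12 : Integrable (fun η => a (ξ - η) * μ ξ η τ * (f η τ - f ξ τ)) := by
    refine (h1.sub h2).congr (Filter.Eventually.of_forall fun η => ?_)
    simp only [Pi.sub_apply]; ring
  unfold Aop Br
  conv_lhs => rw [← e3]
  rw [← integral_add h12 h3]
  congr 1; ext η; ring

lemma Setup.Br_le (H : Setup a μ μm μp) (f : (Fin d → ℝ) → ℝ → ℝ) (ξ τ) :
    ENNReal.ofReal (Br a μ μp f ξ τ) ≤ Be a μ μp (fun η s => ENNReal.ofReal (f η s)) ξ τ := by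
  refine (ofReal_int_le _).trans (lintegral_mono fun η => ?_)
  simp only
  rw [ENNReal.ofReal_mul (H.ann _), ← ENNReal.ofReal_mul (H.mnn _ _ _),
    ← ENNReal.ofReal_mul (sub_nonneg.mpr (H.mub ξ η τ))]
  exact mul_le_mul' le_rfl ENNReal.ofReal_add_le

lemma Setup.a_mul_int (H : Setup a μ μm μp) {R : ℝ} {f : (Fin d → ℝ) → ℝ → ℝ} (h : Nice R f)
    (ξ τ) : Integrable (fun η => a (ξ - η) * f η τ) := by
  refine (H.aint' ξ).mul_bdd (c := R) (h.meas1 τ).aestronglyMeasurable ?_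
  exact Filter.Eventually.of_forall fun η => h.bd η τ

lemma Setup.Br_eq_Be (H : Setup a μ μm μp) {R : ℝ} {f : (Fin d → ℝ) → ℝ → ℝ} (h : Nice R f)
    (hf : ∀ ξ s, 0 ≤ f ξ s) (ξ τ) :
    ENNReal.ofReal (Br a μ μp f ξ τ) = Be a μ μp (fun η s => ENNReal.ofReal (f η s)) ξ τ := by
  unfold Br Be
  have hnn : ∀ η, 0 ≤ μp - μ ξ η τ := fun η => by linarith [H.mub ξ η τ]
  rw [ofReal_integral_eq_lintegral_ofReal (H.Br_int (H.a_mul_int h ξ τ))]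
  · congr 1; ext η
    have := hnn η
    have := hf ξ τ
    have := hf η τ
    have := H.mnn ξ η τ
    rw [ENNReal.ofReal_mul (H.ann _), ← ENNReal.ofReal_mul (H.mnn _ _ _),
      ← ENNReal.ofReal_mul (hnn η), ← ENNReal.ofReal_add (by positivity) (by positivity)]
  · refine Filter.Eventually.of_forall fun η => ?_
    have := hnn η
    have := hf ξ τ
    have := hf η τ
    have := H.mnn ξ η τ
    have := H.ann (ξ - η)
    simp only [Pi.zero_apply]
    positivity

lemma Setup.Br_nonneg (H : Setup a μ μm μp) {f : (Fin d → ℝ) → ℝ → ℝ}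
    (hf : ∀ ξ s, 0 ≤ f ξ s) (ξ τ) : 0 ≤ Br a μ μp f ξ τ := by
  refine integral_nonneg fun η => ?_
  have : 0 ≤ μp - μ ξ η τ := by linarith [H.mub ξ η τ]
  have := hf ξ τ
  have := hf η τ
  have := H.mnn ξ η τ
  have := H.ann (ξ - η)
  simp only [Pi.zero_apply]
  positivity

lemma Setup.Br_meas (H : Setup a μ μm μp) {f : (Fin d → ℝ) → ℝ → ℝ}
    (hW : Measurable (fun p : (Fin d → ℝ) × ℝ => f p.1 p.2)) :
    Measurable (fun p : (Fin d → ℝ) × ℝ => Br a μ μp f p.1 p.2) := by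
  unfold Br
  apply StronglyMeasurable.measurable
  apply StronglyMeasurable.integral_prod_right'
    (f := fun q : ((Fin d → ℝ) × ℝ) × (Fin d → ℝ) => a (q.1.1 - q.2) *
      (μ q.1.1 q.2 q.1.2 * f q.2 q.1.2 + (μp - μ q.1.1 q.2 q.1.2) * f q.1.1 q.1.2))
  have h1 := H.ameas
  have h2 : Measurable (fun q : ((Fin d → ℝ) × ℝ) × (Fin d → ℝ) => μ q.1.1 q.2 q.1.2) :=
    H.mmeas' (by fun_prop) (by fun_prop) (by fun_prop)
  have h3 : Measurable (fun q : ((Fin d → ℝ) × ℝ) × (Fin d → ℝ) => f q.2 q.1.2) :=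
    hW.comp (f := fun q : ((Fin d → ℝ) × ℝ) × (Fin d → ℝ) => (q.2, q.1.2)) (by fun_prop)
  have h4 : Measurable (fun q : ((Fin d → ℝ) × ℝ) × (Fin d → ℝ) => f q.1.1 q.1.2) :=
    hW.comp (f := fun q : ((Fin d → ℝ) × ℝ) × (Fin d → ℝ) => (q.1.1, q.1.2)) (by fun_prop)
  exact ((h1.comp (by fun_prop)).mul ((h2.mul h3).add
    ((h2.const_sub μp).mul h4))).stronglyMeasurable

lemma Setup.Br_nice (H : Setup a μ μm μp) {R : ℝ} {f : (Fin d → ℝ) → ℝ → ℝ} (h : Nice R f) :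
    Nice (μp * R) (Br a μ μp f) where
  meas := H.Br_meas h.meas
  per ξ s k := by
    unfold Br
    rw [← integral_add_right_eq_self _ (fun i => (k i : ℝ))]
    congr 1; ext η
    rw [add_sub_add_right_eq_sub, H.per1, H.per2, h.per, h.per]
  tper ξ s := by
    unfold Br
    simp only [H.per3, h.tper]
  bd ξ s := by
    have hi := (H.aint' ξ).mul_const (μp * R)
    have := norm_integral_le_of_norm_le hi (f := fun η => a (ξ - η) *
      (μ ξ η s * f η s + (μp - μ ξ η s) * f ξ s)) (Filter.Eventually.of_forall fun η => by
        rw [Real.norm_eq_abs, abs_mul, abs_of_nonneg (H.ann _)]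
        refine mul_le_mul_of_nonneg_left ?_ (H.ann _)
        refine (abs_add_le _ _).trans ?_
        rw [abs_mul, abs_mul, abs_of_nonneg (H.mnn _ _ _),
          abs_of_nonneg (by linarith [H.mub ξ η s] : 0 ≤ μp - μ ξ η s)]
        have h1 := mul_le_mul_of_nonneg_left (h.bd η s) (H.mnn ξ η s)
        have h2 := mul_le_mul_of_nonneg_left (h.bd ξ s)
          (by linarith [H.mub ξ η s] : 0 ≤ μp - μ ξ η s)
        linarith)
    rw [integral_mul_const, H.amass', one_mul] at this
    exact this

lemma Nice.intOn {R : ℝ} {f : (Fin d → ℝ) → ℝ → ℝ} (h : Nice R f) (ξ) :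
    IntegrableOn (f ξ) (Ioo 0 1) :=
  Measure.integrableOn_of_bounded (M := R) (by simp) (curry_meas h.meas ξ).aestronglyMeasurable
    (Filter.Eventually.of_forall fun s => h.bd ξ s)

lemma Sr_add {l : ℝ} (hl : 0 < l) {h h' : ℝ → ℝ} (hh : IntegrableOn h (Ioo 0 1))
    (hh' : IntegrableOn h' (Ioo 0 1)) (s : ℝ) :
    Sr l (fun τ => h τ + h' τ) s = Sr l h s + Sr l h' s := by
  unfold Sr
  rw [← integral_add (gk_mul_integrable hl hh (fract_mem s))
    (gk_mul_integrable hl hh' (fract_mem s))]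
  simp only [mul_add]

lemma Sr_affine {l : ℝ} (hl : 0 < l) {h : ℝ → ℝ} (hh : IntegrableOn h (Ioo 0 1)) (c e s : ℝ) :
    Sr l (fun τ => c + e * h τ) s = c / l + e * Sr l h s := by
  rw [Sr_add hl (h := fun _ => c) (by simp) (hh.const_mul e), Sr_const hl]
  congr 1
  unfold Sr
  rw [← integral_const_mul]
  congr 1; ext τ; ring

lemma Sr_nonneg {l : ℝ} (hl : 0 < l) {h : ℝ → ℝ} (hh : ∀ τ, 0 ≤ h τ) (s : ℝ) : 0 ≤ Sr l h s :=
  integral_nonneg fun τ => mul_nonneg (gk_nonneg hl _ _) (hh τ)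

lemma Sr_ofReal {l : ℝ} (hl : 0 < l) {h : ℝ → ℝ} (hh : IntegrableOn h (Ioo 0 1))
    (hn : ∀ τ, 0 ≤ h τ) (s : ℝ) :
    ENNReal.ofReal (Sr l h s) = Se l (fun τ => ENNReal.ofReal (h τ)) s := by
  unfold Sr Se
  rw [ofReal_integral_eq_lintegral_ofReal (gk_mul_integrable hl hh (fract_mem s))
    (Filter.Eventually.of_forall fun τ => mul_nonneg (gk_nonneg hl _ _) (hn τ))]
  congr 1; ext τ
  rw [ENNReal.ofReal_mul (gk_nonneg hl _ _)]

lemma Sr_ofReal_le {l : ℝ} (hl : 0 < l) (h : ℝ → ℝ) (s : ℝ) :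
    ENNReal.ofReal (Sr l h s) ≤ Se l (fun τ => ENNReal.ofReal (h τ)) s := by
  unfold Sr Se
  refine (ofReal_int_le _).trans (lintegral_mono fun τ => ?_)
  rw [ENNReal.ofReal_mul (gk_nonneg hl _ _)]

lemma Nice.Sr {l R : ℝ} (hl : 0 < l) {h : (Fin d → ℝ) → ℝ → ℝ} (hh : Nice R h) :
    Nice (R / l) (fun ξ s => Sr l (h ξ) s) where
  meas := by
    unfold _root_.Sr
    apply StronglyMeasurable.measurable
    apply StronglyMeasurable.integral_prod_right'
      (f := fun q : ((Fin d → ℝ) × ℝ) × ℝ => gk l (Int.fract q.1.2) q.2 * h q.1.1 q.2)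
    have h1 : Measurable (fun q : ((Fin d → ℝ) × ℝ) × ℝ => gk l (Int.fract q.1.2) q.2) :=
      (gk_meas l).comp (f := fun q : ((Fin d → ℝ) × ℝ) × ℝ => (Int.fract q.1.2, q.2)) (by fun_prop)
    have h2 : Measurable (fun q : ((Fin d → ℝ) × ℝ) × ℝ => h q.1.1 q.2) :=
      hh.meas.comp (f := fun q : ((Fin d → ℝ) × ℝ) × ℝ => (q.1.1, q.2)) (by fun_prop)
    exact (h1.mul h2).stronglyMeasurable
  per ξ s k := by
    have : h (ξ + fun i => (k i : ℝ)) = h ξ := funext fun τ => hh.per ξ τ k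
    simp only [this]
  tper ξ s := by unfold _root_.Sr; simp
  bd ξ s := by
    have h1 := Sr_nonneg hl (h := fun τ => R + 1 * h ξ τ)
      (fun τ => by have := abs_le.mp (hh.bd ξ τ); linarith) s
    have h2 := Sr_nonneg hl (h := fun τ => R + (-1) * h ξ τ)
      (fun τ => by have := abs_le.mp (hh.bd ξ τ); linarith) s
    rw [Sr_affine hl (hh.intOn ξ)] at h1 h2
    rw [abs_le]; constructor <;> linarith

lemma Setup.Pr_nice (H : Setup a μ μm μp) {R : ℝ} {f : (Fin d → ℝ) → ℝ → ℝ} (h : Nice R f) :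
    Nice R (Pr a μ μp f) := by
  have := (H.Br_nice h).Sr H.ppos
  rwa [mul_div_cancel_left₀ _ H.ppos.ne'] at this

lemma Setup.Br_affine (H : Setup a μ μm μp) {R : ℝ} {f : (Fin d → ℝ) → ℝ → ℝ} (h : Nice R f)
    (c e : ℝ) (ξ τ) :
    Br a μ μp (fun ξ s => c + e * f ξ s) ξ τ = μp * c + e * Br a μ μp f ξ τ := by
  unfold Br
  have e3 : ∫ η, a (ξ - η) * (μp * c) = μp * c := by
    rw [integral_mul_const, H.amass' ξ, one_mul]
  conv_rhs => rw [← e3]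
  rw [← integral_const_mul, ← integral_add ((H.aint' ξ).mul_const _)
    ((H.Br_int (H.a_mul_int h ξ τ)).const_mul e)]
  congr 1; ext η; ring

lemma Setup.Br_add (H : Setup a μ μm μp) {R R' : ℝ} {f g : (Fin d → ℝ) → ℝ → ℝ} (h : Nice R f)
    (h' : Nice R' g) (ξ τ) :
    Br a μ μp (fun ξ s => f ξ s + g ξ s) ξ τ = Br a μ μp f ξ τ + Br a μ μp g ξ τ := by
  unfold Br
  rw [← integral_add (H.Br_int (H.a_mul_int h ξ τ)) (H.Br_int (H.a_mul_int h' ξ τ))]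
  congr 1; ext η; ring

lemma Setup.Pr_affine (H : Setup a μ μm μp) {R : ℝ} {f : (Fin d → ℝ) → ℝ → ℝ} (h : Nice R f)
    (c e : ℝ) :
    Pr a μ μp (fun ξ s => c + e * f ξ s) = fun ξ s => c + e * Pr a μ μp f ξ s := by
  ext ξ s
  have : Br a μ μp (fun ξ s => c + e * f ξ s) ξ = fun τ => μp * c + e * Br a μ μp f ξ τ :=
    funext fun τ => H.Br_affine h c e ξ τ
  unfold Pr
  rw [this, Sr_affine H.ppos ((H.Br_nice h).intOn ξ), mul_div_cancel_left₀ _ H.ppos.ne']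

lemma Setup.Pr_add (H : Setup a μ μm μp) {R R' : ℝ} {f g : (Fin d → ℝ) → ℝ → ℝ} (h : Nice R f)
    (h' : Nice R' g) :
    Pr a μ μp (fun ξ s => f ξ s + g ξ s) = fun ξ s => Pr a μ μp f ξ s + Pr a μ μp g ξ s := by
  ext ξ s
  have : Br a μ μp (fun ξ s => f ξ s + g ξ s) ξ = fun τ => Br a μ μp f ξ τ + Br a μ μp g ξ τ :=
    funext fun τ => H.Br_add h h' ξ τ
  unfold Pr
  rw [this, Sr_add H.ppos ((H.Br_nice h).intOn ξ) ((H.Br_nice h').intOn ξ)]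

lemma Setup.Pr_nonneg (H : Setup a μ μm μp) {f : (Fin d → ℝ) → ℝ → ℝ}
    (hf : ∀ ξ s, 0 ≤ f ξ s) (ξ s) : 0 ≤ Pr a μ μp f ξ s :=
  Sr_nonneg H.ppos (H.Br_nonneg hf ξ) s

lemma Setup.Pr_eq_Pe (H : Setup a μ μm μp) {R : ℝ} {f : (Fin d → ℝ) → ℝ → ℝ} (h : Nice R f)
    (hf : ∀ ξ s, 0 ≤ f ξ s) (ξ s) :
    ENNReal.ofReal (Pr a μ μp f ξ s) = Pe a μ μp (fun η s => ENNReal.ofReal (f η s)) ξ s := by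
  unfold Pr Pe
  rw [Sr_ofReal H.ppos ((H.Br_nice h).intOn ξ) (H.Br_nonneg hf ξ)]
  congr 1; ext τ; exact H.Br_eq_Be h hf ξ τ

end

section
variable {d : ℕ} {a : (Fin d → ℝ) → ℝ} {μ : (Fin d → ℝ) → (Fin d → ℝ) → ℝ → ℝ} {μm μp : ℝ}

/-- space-time mean -/
def mn (f : (Fin d → ℝ) → ℝ → ℝ) : ℝ := ∫ p in cube d ×ˢ Ioo (0:ℝ) 1, f (Prod.fst p) (Prod.snd p)

lemma vol_cell : volume (cube d ×ˢ Ioo (0:ℝ) 1) = 1 := by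
  rw [Measure.volume_eq_prod, Measure.prod_prod, volume_cube]; simp

lemma meas_cell : MeasurableSet (cube d ×ˢ Ioo (0:ℝ) 1) :=
  (measurableSet_cube d).prod measurableSet_Ioo

lemma Nice.int2 {R : ℝ} {f : (Fin d → ℝ) → ℝ → ℝ} (h : Nice R f) :
    IntegrableOn (fun p : (Fin d → ℝ) × ℝ => f p.1 p.2) (cube d ×ˢ Ioo (0:ℝ) 1) :=
  Measure.integrableOn_of_bounded (M := R) (by simp [vol_cell]) h.meas.aestronglyMeasurable
    (Filter.Eventually.of_forall fun s => h.bd s.1 s.2)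

lemma mn_affine {R : ℝ} {f : (Fin d → ℝ) → ℝ → ℝ} (h : Nice R f) (c e : ℝ) :
    mn (fun ξ s => c + e * f ξ s) = c + e * mn f := by
  unfold mn
  have hc : Integrable (fun _ : (Fin d → ℝ) × ℝ => c)
      (volume.restrict (cube d ×ˢ Ioo (0:ℝ) 1)) := integrableOn_const (by simp [vol_cell])
  rw [integral_add hc (h.int2.const_mul e), integral_const_mul]
  simp [Measure.real, vol_cell]

lemma mn_abs_le {R : ℝ} {f : (Fin d → ℝ) → ℝ → ℝ} (h : Nice R f) : |mn f| ≤ R := by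
  have := norm_setIntegral_le_of_norm_le_const (s := cube d ×ˢ Ioo (0:ℝ) 1) (μ := volume)
    (f := fun p : (Fin d → ℝ) × ℝ => f p.1 p.2) (C := R) (by simp [vol_cell])
    (fun p _ => h.bd p.1 p.2)
  unfold mn
  simpa [Measure.real, vol_cell] using this

lemma mn_add {R R' : ℝ} {f g : (Fin d → ℝ) → ℝ → ℝ} (h : Nice R f) (h' : Nice R' g) :
    mn (fun ξ s => f ξ s + g ξ s) = mn f + mn g :=
  integral_add h.int2 h'.int2

lemma lint_cell {W : (Fin d → ℝ) → ℝ → ℝ≥0∞}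
    (hW : Measurable (fun p : (Fin d → ℝ) × ℝ => W p.1 p.2)) :
    ∫⁻ p in cube d ×ˢ Ioo (0:ℝ) 1, W p.1 p.2 = ∫⁻ ξ in cube d, ∫⁻ s in Ioo (0:ℝ) 1, W ξ s := by
  rw [Measure.volume_eq_prod, ← Measure.prod_restrict, lintegral_prod _ hW.aemeasurable]

lemma mn_ofReal {R : ℝ} {f : (Fin d → ℝ) → ℝ → ℝ} (h : Nice R f) (hf : ∀ ξ s, 0 ≤ f ξ s) :
    ENNReal.ofReal (mn f) = ∫⁻ ξ in cube d, ∫⁻ s in Ioo (0:ℝ) 1, ENNReal.ofReal (f ξ s) := by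
  unfold mn
  rw [ofReal_integral_eq_lintegral_ofReal h.int2 (Filter.Eventually.of_forall fun p => hf p.1 p.2),
    ← lint_cell h.meas.ennreal_ofReal]

lemma mn_nonneg {f : (Fin d → ℝ) → ℝ → ℝ} (hf : ∀ ξ s, 0 ≤ f ξ s) : 0 ≤ mn f :=
  integral_nonneg fun p => hf p.1 p.2

lemma Nice.add_nn {R : ℝ} {f : (Fin d → ℝ) → ℝ → ℝ} (h : Nice R f) (ξ s) : 0 ≤ R + 1 * f ξ s := by
  have := abs_le.mp (h.bd ξ s); linarith

lemma Nice.sub_nn {R : ℝ} {f : (Fin d → ℝ) → ℝ → ℝ} (h : Nice R f) (ξ s) :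
    0 ≤ R + (-1) * f ξ s := by
  have := abs_le.mp (h.bd ξ s); linarith

lemma mn_Sr {l R : ℝ} (hl : 0 < l) {f : (Fin d → ℝ) → ℝ → ℝ} (h : Nice R f) :
    mn (fun ξ s => Sr l (f ξ) s) = 1 / l * mn f := by
  have hn := h.affine R 1
  have e1 := mn_ofReal (hn.Sr hl) (fun ξ s => Sr_nonneg hl (h.add_nn ξ) s)
  simp_rw [fun ξ s => Sr_ofReal hl (hn.intOn ξ) (h.add_nn ξ) s] at e1
  rw [SeBe_cons hl (h := fun ξ τ => ENNReal.ofReal (R + 1 * f ξ τ)) hn.meas.ennreal_ofReal,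
    ← mn_ofReal hn h.add_nn,
    ← ENNReal.ofReal_mul (by positivity)] at e1
  simp_rw [fun ξ s => Sr_affine hl (h.intOn ξ) R 1 s] at e1
  rw [mn_affine (h.Sr hl), mn_affine h, ENNReal.ofReal_eq_ofReal_iff] at e1
  · have : 1 / l * (R + 1 * mn f) = R / l + 1 / l * mn f := by ring
    linarith
  · have := abs_le.mp (mn_abs_le (h.Sr hl)); linarith
  · have := abs_le.mp (mn_abs_le h)
    apply mul_nonneg (by positivity); linarith

lemma Setup.mn_Pr_nn (H : Setup a μ μm μp) {R : ℝ} {f : (Fin d → ℝ) → ℝ → ℝ} (h : Nice R f)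
    (hf : ∀ ξ s, 0 ≤ f ξ s) : mn (Pr a μ μp f) = mn f := by
  rw [← ENNReal.ofReal_eq_ofReal_iff (mn_nonneg (H.Pr_nonneg hf)) (mn_nonneg hf),
    mn_ofReal (H.Pr_nice h) (H.Pr_nonneg hf), mn_ofReal h hf]
  simp_rw [H.Pr_eq_Pe h hf]
  apply H.Pe_cons h.meas.ennreal_ofReal
  intro τ ξ k
  simp only [h.per]

lemma Setup.mn_Pr (H : Setup a μ μm μp) {R : ℝ} {f : (Fin d → ℝ) → ℝ → ℝ} (h : Nice R f) :
    mn (Pr a μ μp f) = mn f := by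
  have := H.mn_Pr_nn (h.affine R 1) h.add_nn
  rw [H.Pr_affine h, mn_affine (H.Pr_nice h), mn_affine h] at this
  linarith

lemma Setup.iter_nice (H : Setup a μ μm μp) {R : ℝ} {f : (Fin d → ℝ) → ℝ → ℝ} (h : Nice R f)
    (n : ℕ) : Nice R ((Pr a μ μp)^[n] f) := by
  induction n with
  | zero => simpa
  | succ n ih => rw [Function.iterate_succ_apply']; exact H.Pr_nice ih

lemma Setup.iter_nn (H : Setup a μ μm μp) {f : (Fin d → ℝ) → ℝ → ℝ} (h : ∀ ξ s, 0 ≤ f ξ s)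
    (n : ℕ) : ∀ ξ s, 0 ≤ (Pr a μ μp)^[n] f ξ s := by
  induction n with
  | zero => simpa
  | succ n ih => rw [Function.iterate_succ_apply']; exact H.Pr_nonneg ih

lemma Setup.iter_mn (H : Setup a μ μm μp) {R : ℝ} {f : (Fin d → ℝ) → ℝ → ℝ} (h : Nice R f)
    (n : ℕ) : mn ((Pr a μ μp)^[n] f) = mn f := by
  induction n with
  | zero => simp
  | succ n ih => rw [Function.iterate_succ_apply', H.mn_Pr (H.iter_nice h n), ih]

lemma Setup.iter_affine (H : Setup a μ μm μp) {R : ℝ} {f : (Fin d → ℝ) → ℝ → ℝ} (h : Nice R f)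
    (c e : ℝ) (n : ℕ) : (Pr a μ μp)^[n] (fun ξ s => c + e * f ξ s) =
      fun ξ s => c + e * (Pr a μ μp)^[n] f ξ s := by
  induction n with
  | zero => simp
  | succ n ih =>
    rw [Function.iterate_succ_apply', ih, Function.iterate_succ_apply',
      H.Pr_affine (H.iter_nice h n)]

lemma Setup.iter_lower (H : Setup a μ μm μp) {R : ℝ} {f : (Fin d → ℝ) → ℝ → ℝ} (h : Nice R f)
    (hf : ∀ ξ s, 0 ≤ f ξ s) (n : ℕ) : ∀ ξ s,
    ENNReal.ofReal (c1 μm μp) ^ (n + 1) *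
      (Te a)^[n + 1] (fun η => ∫⁻ τ in Ioo (0:ℝ) 1, ENNReal.ofReal (f η τ)) ξ ≤
      ENNReal.ofReal ((Pr a μ μp)^[n + 1] f ξ s) := by
  have hF : Measurable (fun η => ∫⁻ τ in Ioo (0:ℝ) 1, ENNReal.ofReal (f η τ)) :=
    h.meas.ennreal_ofReal.lintegral_prod_right'
  induction n with
  | zero =>
    intro ξ s
    simp only [zero_add, pow_one, Function.iterate_one]
    rw [H.Pr_eq_Pe h hf]
    exact H.Pe_lower h.meas.ennreal_ofReal ξ s
  | succ n ih =>
    intro ξ s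
    have hn := H.iter_nice h (n + 1)
    rw [Function.iterate_succ_apply' (Pr a μ μp), Function.iterate_succ_apply' (Te a),
      H.Pr_eq_Pe hn (H.iter_nn hf _)]
    refine le_trans ?_ (H.Pe_lower hn.meas.ennreal_ofReal ξ s)
    rw [pow_succ', mul_assoc]
    refine mul_le_mul' le_rfl ?_
    rw [← Te_const_mul H.ameas (Te_iter_meas H.ameas hF _)]
    refine Te_mono (Filter.Eventually.of_forall fun η => ?_) ξ
    calc _ = ∫⁻ τ in Ioo (0:ℝ) 1, ENNReal.ofReal (c1 μm μp) ^ (n + 1) *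
      (Te a)^[n + 1] (fun η => ∫⁻ τ in Ioo (0:ℝ) 1, ENNReal.ofReal (f η τ)) η := by simp
      _ ≤ _ := lintegral_mono fun τ => ih η τ

lemma Setup.doeblin (H : Setup a μ μm μp) : ∃ n : ℕ, 1 ≤ n ∧ ∃ δ : ℝ, 0 < δ ∧ δ ≤ 1 / 2 ∧
    ∀ (R : ℝ) (f : (Fin d → ℝ) → ℝ → ℝ), Nice R f → mn f = 0 →
      Nice ((1 - δ) * R) ((Pr a μ μp)^[n] f) := by
  obtain ⟨n, hn, ε, hε, hs⟩ := spread_cube H.ameas H.ann H.amass H.asymm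
  have hc := H.c1_pos
  set δ := min (1 / 2) ((c1 μm μp) ^ n * ε) with hδ
  have key : ∀ (R : ℝ) (f : (Fin d → ℝ) → ℝ → ℝ), Nice R f → (∀ ξ s, 0 ≤ f ξ s) →
      ∀ ξ s, δ * mn f ≤ (Pr a μ μp)^[n] f ξ s := by
    intro R f h hf ξ s
    have hF : Measurable (fun η => ∫⁻ τ in Ioo (0:ℝ) 1, ENNReal.ofReal (f η τ)) :=
      h.meas.ennreal_ofReal.lintegral_prod_right'
    have h1 := H.iter_lower h hf (n - 1) ξ s
    rw [Nat.sub_add_cancel hn] at h1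
    have h2 := hs _ hF (fun ξ k => by simp only [h.per]) ξ
    rw [← mn_ofReal h hf] at h2
    have h3 := (mul_le_mul' le_rfl h2).trans h1
    rw [← ENNReal.ofReal_pow hc.le, ← mul_assoc, ← ENNReal.ofReal_mul (by positivity),
      ← ENNReal.ofReal_mul (by positivity), ENNReal.ofReal_le_ofReal_iff (H.iter_nn hf n ξ s)] at h3
    refine le_trans ?_ h3
    exact mul_le_mul_of_nonneg_right (min_le_right _ _) (mn_nonneg hf)
  refine ⟨n, hn, δ, by positivity, min_le_left _ _, fun R f h h0 => ?_⟩
  have hN := H.iter_nice h n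
  refine ⟨hN.meas, hN.per, hN.tper, fun ξ s => ?_⟩
  have h1 := key _ _ (h.affine R 1) h.add_nn ξ s
  have h2 := key _ _ (h.affine R (-1)) h.sub_nn ξ s
  rw [H.iter_affine h, mn_affine h, h0] at h1 h2
  rw [abs_le]; constructor <;> linarith

lemma Setup.decay (H : Setup a μ μm μp) : ∃ ρ : ℝ, 0 ≤ ρ ∧ ρ < 1 ∧ ∃ C : ℝ, 0 ≤ C ∧
    ∀ (R : ℝ) (f : (Fin d → ℝ) → ℝ → ℝ), Nice R f → mn f = 0 → ∀ i,
      Nice (C * R * ρ ^ i) ((Pr a μ μp)^[i] f) := by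
  obtain ⟨n, hn, δ, hδ, hδ2, hD⟩ := H.doeblin
  have hn0 : n ≠ 0 := by omega
  set ρ : ℝ := (1 - δ) ^ (1 / (n:ℝ)) with hρ
  have hρ0 : 0 ≤ ρ := Real.rpow_nonneg (by linarith) _
  have hρn : ρ ^ n = 1 - δ := by
    rw [hρ, one_div]; exact Real.rpow_inv_natCast_pow (by linarith) hn0
  have hρ1 : ρ < 1 := by
    by_contra hh
    have := one_le_pow₀ (not_lt.mp hh) (n := n)
    linarith
  refine ⟨ρ, hρ0, hρ1, 2, by norm_num, fun R f h h0 i => ?_⟩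
  have step : ∀ k, Nice ((1 - δ) ^ k * R) ((Pr a μ μp)^[n * k] f) := by
    intro k
    induction k with
    | zero => simpa using h
    | succ k ih =>
      have := hD _ _ ih (by rw [H.iter_mn h, h0])
      rw [← Function.iterate_add_apply] at this
      rw [pow_succ', mul_assoc, mul_add, mul_one, add_comm (n * k)]
      exact this
  have h1 := H.iter_nice (step (i / n)) (i % n)
  rw [← Function.iterate_add_apply, Nat.mod_add_div] at h1
  refine h1.mono ?_
  have h2 : ρ ^ i = (1 - δ) ^ (i / n) * ρ ^ (i % n) := by
    conv_lhs => rw [← Nat.div_add_mod i n, pow_add, pow_mul, hρn]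
  have h3 : ρ ^ n ≤ ρ ^ (i % n) :=
    pow_le_pow_of_le_one hρ0 hρ1.le (Nat.mod_lt _ (by omega)).le
  have h4 : (1:ℝ) / 2 ≤ ρ ^ (i % n) := by linarith
  have h5 : 0 ≤ (1 - δ) ^ (i / n) := pow_nonneg (by linarith) _
  have := h.R_nn
  rw [h2]
  nlinarith [mul_nonneg h5 this]

end

section
variable {d : ℕ} {a : (Fin d → ℝ) → ℝ} {μ : (Fin d → ℝ) → (Fin d → ℝ) → ℝ → ℝ} {μm μp : ℝ}

lemma Setup.m_int (H : Setup a μ μm μp) : Integrable (fun z => a z * (1 + ‖z‖ ^ 2)) := by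
  refine (H.aint.add H.amom).congr (Filter.Eventually.of_forall fun z => ?_)
  simp only [Pi.add_apply]; ring

lemma Setup.z_bd (H : Setup a μ μm μp) (j : Fin d) (z : Fin d → ℝ) :
    |a z * z j| ≤ a z * (1 + ‖z‖ ^ 2) := by
  rw [abs_mul, abs_of_nonneg (H.ann z)]
  refine mul_le_mul_of_nonneg_left ?_ (H.ann z)
  have := norm_le_pi_norm z j
  rw [Real.norm_eq_abs] at this
  nlinarith [sq_nonneg (‖z‖ - 1), norm_nonneg z]

lemma Setup.z_int (H : Setup a μ μm μp) (j : Fin d) : Integrable (fun z => a z * z j) := by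
  have := H.ameas
  refine H.m_int.mono' (by fun_prop) (Filter.Eventually.of_forall fun z => H.z_bd j z)

lemma Setup.q_int (H : Setup a μ μm μp) (j : Fin d) (ξ : Fin d → ℝ) (s : ℝ) :
    Integrable fun η => a (ξ - η) * μ ξ η s * (η j - ξ j) := by
  refine (H.mu_mul_int ((H.z_int j).comp_sub_left ξ) ξ s).neg.congr
    (Filter.Eventually.of_forall fun η => ?_)
  simp only [Pi.neg_apply, Pi.sub_apply]; ring

lemma Setup.q_bd (H : Setup a μ μm μp) (j : Fin d) (ξ : Fin d → ℝ) (s : ℝ) :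
    |qfun a μ j ξ s| ≤ μp * ∫ z, a z * (1 + ‖z‖ ^ 2) := by
  unfold qfun
  rw [abs_neg]
  have hi := (H.m_int.comp_sub_left ξ).const_mul μp
  have := norm_integral_le_of_norm_le hi (f := fun η => a (ξ - η) * μ ξ η s * (η j - ξ j))
    (Filter.Eventually.of_forall fun η => by
      have e : a (ξ - η) * μ ξ η s * (η j - ξ j) = - (μ ξ η s * (a (ξ - η) * (ξ - η) j)) := by
        simp only [Pi.sub_apply]; ring
      rw [e, norm_neg, Real.norm_eq_abs, abs_mul, abs_of_nonneg (H.mnn _ _ _)]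
      exact mul_le_mul (H.mub _ _ _) (H.z_bd j _) (abs_nonneg _) H.ppos.le)
  rw [integral_const_mul, integral_sub_left_eq_self (fun z => a z * (1 + ‖z‖ ^ 2))] at this
  exact this

lemma Setup.q_nice (H : Setup a μ μm μp) (j : Fin d) :
    Nice (μp * ∫ z, a z * (1 + ‖z‖ ^ 2)) (qfun a μ j) where
  meas := by
    unfold qfun
    apply Measurable.neg
    apply StronglyMeasurable.measurable
    apply StronglyMeasurable.integral_prod_right'
      (f := fun q : ((Fin d → ℝ) × ℝ) × (Fin d → ℝ) => a (q.1.1 - q.2) * μ q.1.1 q.2 q.1.2 *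
        (q.2 j - q.1.1 j))
    have h1 := H.ameas
    have h2 : Measurable (fun q : ((Fin d → ℝ) × ℝ) × (Fin d → ℝ) => μ q.1.1 q.2 q.1.2) :=
      H.mmeas' (by fun_prop) (by fun_prop) (by fun_prop)
    exact (((h1.comp (by fun_prop)).mul h2).mul (by fun_prop)).stronglyMeasurable
  per ξ s k := by
    unfold qfun
    rw [← integral_add_right_eq_self _ (fun i => (k i : ℝ))]
    congr 2; ext η
    rw [add_sub_add_right_eq_sub, H.per1, H.per2]
    simp
  tper ξ s := by unfold qfun; simp only [H.per3]
  bd := H.q_bd j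

lemma Setup.q_mean (H : Setup a μ μm μp) (j : Fin d) (s : ℝ) :
    ∫ ξ in cube d, qfun a μ j ξ s = 0 := by
  have ham := H.ameas
  have e1 : ∀ ξ, qfun a μ j ξ s = -∫ z, a z * μ ξ (ξ + z) s * z j := by
    intro ξ
    unfold qfun
    rw [← integral_add_left_eq_self _ ξ]
    congr 2; ext z
    have : ξ - (ξ + z) = -z := by abel
    rw [this, H.asymm]; simp
  simp_rw [e1]
  have hm : Measurable (fun p : (Fin d → ℝ) × (Fin d → ℝ) => μ p.1 (p.1 + p.2) s) :=
    H.mmeas' (by fun_prop) (by fun_prop) (by fun_prop)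
  rw [integral_neg, integral_integral_swap]
  · set I : (Fin d → ℝ) → ℝ := fun z => ∫ ξ in cube d, a z * μ ξ (ξ + z) s * z j with hI
    have hodd : ∀ z, I (-z) = - I z := by
      intro z
      have e2 : ∀ z, I z = (a z * z j) * ∫ ξ in cube d, μ ξ (ξ + z) s := by
        intro z
        rw [hI, ← integral_const_mul]
        simp only
        congr 1; ext ξ; ring
      have hp : SPer (fun ξ => μ ξ (ξ + -z) s) := by
        intro ξ k
        have : ξ + (fun i => (k i : ℝ)) + -z = ξ + -z + fun i => (k i : ℝ) := by abel
        simp only [this, H.per1, H.per2]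
      have e3 := hp.setIntegral_add z
      simp only [add_neg_cancel_right] at e3
      rw [e2, e2, ← e3, H.asymm]
      simp_rw [fun ξ => H.msymm (ξ + z) ξ s]
      simp
    have e4 : ∫ z, I z = - ∫ z, I z := by
      conv_lhs => rw [← integral_neg_eq_self]
      simp_rw [hodd]
      rw [integral_neg]
    change -∫ z, I z = 0
    linarith
  · have hc : Integrable (fun _ : Fin d → ℝ => μp) (volume.restrict (cube d)) :=
      integrableOn_const (by simp [volume_cube])
    refine (hc.mul_prod H.m_int).mono' ?_ (Filter.Eventually.of_forall fun p => ?_)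
    · refine Measurable.aestronglyMeasurable ?_
      exact ((ham.comp measurable_snd).mul hm).mul (by fun_prop)
    · simp only [Function.uncurry]
      have e : a p.2 * μ p.1 (p.1 + p.2) s * p.2 j = μ p.1 (p.1 + p.2) s * (a p.2 * p.2 j) := by
        ring
      rw [e, Real.norm_eq_abs, abs_mul, abs_of_nonneg (H.mnn _ _ _)]
      exact mul_le_mul (H.mub _ _ _) (H.z_bd j _) (abs_nonneg _) H.ppos.le

lemma Setup.q_mn (H : Setup a μ μm μp) (j : Fin d) : mn (qfun a μ j) = 0 := by
  have h := (H.q_nice j).int2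
  unfold mn
  rw [Measure.volume_eq_prod] at h ⊢
  rw [← Measure.prod_restrict, integral_prod_symm _ (by rwa [Measure.prod_restrict])]
  simp [H.q_mean]

end

section
variable {d : ℕ} {a : (Fin d → ℝ) → ℝ} {μ : (Fin d → ℝ) → (Fin d → ℝ) → ℝ → ℝ} {μm μp : ℝ}

lemma Setup.fixed_point (H : Setup a μ μm μp) {R : ℝ} {g : (Fin d → ℝ) → ℝ → ℝ} (hg : Nice R g)
    (hg0 : mn g = 0) : ∃ (R' : ℝ) (χ : (Fin d → ℝ) → ℝ → ℝ), Nice R' χ ∧ mn χ = 0 ∧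
      ∀ ξ s, χ ξ s = Pr a μ μp χ ξ s + g ξ s := by
  obtain ⟨ρ, hρ0, hρ1, C, hC, hdec⟩ := H.decay
  set u : ℕ → (Fin d → ℝ) → ℝ → ℝ := fun i => (Pr a μ μp)^[i] g with hu
  have hun : ∀ i, Nice (C * R * ρ ^ i) (u i) := hdec R g hg hg0
  have hgeo : ∀ N, HasSum (fun i => C * R * ρ ^ (i + N)) (C * R * ρ ^ N * (1 - ρ)⁻¹) := by
    intro N
    have := (hasSum_geometric_of_lt_one hρ0 hρ1).mul_left (C * R * ρ ^ N)
    refine this.congr_fun ?_ |> id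
    intro i; ring
  have hsum : ∀ ξ s, Summable (fun i => u i ξ s) := fun ξ s =>
    Summable.of_norm_bounded (hgeo 0).summable (fun i => (hun i).bd ξ s)
  set χ : (Fin d → ℝ) → ℝ → ℝ := fun ξ s => ∑' i, u i ξ s with hχ
  set S : ℕ → (Fin d → ℝ) → ℝ → ℝ := fun N ξ s => ∑ i ∈ Finset.range N, u i ξ s with hS
  have tail : ∀ N ξ s, |χ ξ s - S N ξ s| ≤ C * R * ρ ^ N * (1 - ρ)⁻¹ := by
    intro N ξ s
    have e := (hsum ξ s).sum_add_tsum_nat_add N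
    have : χ ξ s - S N ξ s = ∑' i, u (i + N) ξ s := by
      simp only [hχ, hS]; linarith
    rw [this]
    rw [← Real.norm_eq_abs]
    exact tsum_of_norm_bounded (hgeo N) (fun i => (hun (i + N)).bd ξ s)
  have hSucc : ∀ N, S (N + 1) = fun ξ s => S N ξ s + u N ξ s := by
    intro N; ext ξ s; simp only [hS, Finset.sum_range_succ]
  have hSN : ∀ N, ∃ R', Nice R' (S N) ∧ mn (S N) = 0 ∧
      ∀ ξ s, Pr a μ μp (S N) ξ s = S (N + 1) ξ s - g ξ s := by
    intro N
    induction N with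
    | zero =>
      have e0 : S 0 = fun ξ s => 0 + 0 * g ξ s := by ext ξ s; simp [hS]
      refine ⟨_, e0 ▸ hg.affine 0 0, ?_, ?_⟩
      · rw [e0, mn_affine hg]; simp
      · intro ξ s
        rw [hSucc, e0, H.Pr_affine hg]; simp [hu]
    | succ N ih =>
      obtain ⟨R', h1, h2, h3⟩ := ih
      rw [hSucc (N + 1), hSucc N]
      refine ⟨_, h1.add (hun N), ?_, ?_⟩
      · rw [mn_add h1 (hun N), h2, H.iter_mn hg, hg0, add_zero]
      · intro ξ s
        rw [H.Pr_add h1 (hun N)]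
        simp only
        rw [h3, hSucc N]
        have : Pr a μ μp (u N) = u (N + 1) := by
          simp only [hu, Function.iterate_succ_apply']
        rw [this]; ring
  have hχn : Nice (C * R * ρ ^ 0 * (1 - ρ)⁻¹) χ := by
    refine ⟨?_, ?_, ?_, ?_⟩
    · refine measurable_of_tendsto_metrizable (f := fun N (p : (Fin d → ℝ) × ℝ) => S N p.1 p.2)
        (fun N => ?_) ?_
      · obtain ⟨R', h1, -⟩ := hSN N
        exact h1.meas
      · rw [tendsto_pi_nhds]
        intro p
        exact (hsum p.1 p.2).hasSum.tendsto_sum_nat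
    · intro ξ s k; simp only [hχ, (hun _).per]
    · intro ξ s; simp only [hχ, (hun _).tper]
    · intro ξ s
      have := tail 0 ξ s
      simpa [hS] using this
  have hD : ∀ N, Nice (C * R * ρ ^ N * (1 - ρ)⁻¹) (fun ξ s => χ ξ s + (0 + (-1) * S N ξ s)) := by
    intro N
    obtain ⟨R', h1, -⟩ := hSN N
    have := hχn.add (h1.affine 0 (-1))
    refine ⟨this.meas, this.per, this.tper, fun ξ s => ?_⟩
    have e : χ ξ s + (0 + (-1) * S N ξ s) = χ ξ s - S N ξ s := by ring
    rw [e]; exact tail N ξ s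
  have hlim : Filter.Tendsto (fun N => C * R * ρ ^ N * (1 - ρ)⁻¹) Filter.atTop (𝓝 0) := by
    have := ((tendsto_pow_atTop_nhds_zero_of_lt_one hρ0 hρ1).const_mul (C * R)).mul_const (1 - ρ)⁻¹
    simpa using this
  refine ⟨_, χ, hχn, ?_, ?_⟩
  · have : ∀ N, |mn χ| ≤ C * R * ρ ^ N * (1 - ρ)⁻¹ := by
      intro N
      obtain ⟨R', h1, h2, h3⟩ := hSN N
      have := mn_abs_le (hD N)
      rw [mn_add hχn (h1.affine 0 (-1)), mn_affine h1, h2] at this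
      simpa using this
    have := ge_of_tendsto' hlim this
    exact abs_eq_zero.mp (le_antisymm this (abs_nonneg _))
  · intro ξ s
    have : ∀ N, |χ ξ s - (Pr a μ μp χ ξ s + g ξ s)| ≤
        C * R * ρ ^ N * (1 - ρ)⁻¹ + C * R * ρ ^ (N + 1) * (1 - ρ)⁻¹ := by
      intro N
      obtain ⟨R', h1, h2, h3⟩ := hSN N
      have b1 := (H.Pr_nice (hD N)).bd ξ s
      rw [H.Pr_add hχn (h1.affine 0 (-1)), H.Pr_affine h1] at b1
      simp only at b1
      rw [h3] at b1
      have b2 := tail (N + 1) ξ s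
      rw [abs_le] at *
      constructor <;> linarith
    have h2 := ge_of_tendsto' (hlim.add ((Filter.tendsto_add_atTop_iff_nat 1).mpr hlim)) this
    rw [add_zero] at h2
    exact sub_eq_zero.mp (abs_eq_zero.mp (le_antisymm h2 (abs_nonneg _)))

lemma Setup.exists_sol (H : Setup a μ μm μp) {R : ℝ} {q : (Fin d → ℝ) → ℝ → ℝ} (hq : Nice R q)
    (hq0 : mn q = 0) : ∃ χ, IsCellSol a μ q χ ∧ mn χ = 0 := by
  have hg := hq.Sr H.ppos
  obtain ⟨R', χ, hn, h0, hfix⟩ := H.fixed_point (a := a) (μ := μ) hg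
    (by rw [mn_Sr H.ppos hq, hq0, mul_zero])
  refine ⟨χ, ⟨hn.meas, hn.per, hn.tper, ?_, ?_⟩, h0⟩
  · refine Measure.integrableOn_of_bounded (M := R' ^ 2) (by simp [vol_cell])
      (hn.meas.pow_const 2).aestronglyMeasurable (Filter.Eventually.of_forall fun p => ?_)
    rw [Real.norm_eq_abs, abs_pow]
    exact pow_le_pow_left₀ (abs_nonneg _) (hn.bd _ _) 2
  · refine Filter.Eventually.of_forall fun ξ s hs => ?_
    have hB := H.Br_nice hn
    have hfix' : ∀ s, χ ξ s = Sr μp (fun τ => Br a μ μp χ ξ τ + q ξ τ) s := by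
      intro s
      rw [hfix, Sr_add H.ppos (hB.intOn ξ) (hq.intOn ξ)]
      rfl
    have := ode_E H.ppos ((hB.intOn ξ).add (hq.intOn ξ)) hs
    simp only [Pi.add_def] at this
    simp_rw [← hfix'] at this
    rw [this]
    congr 2; ext τ
    have := H.Br_eq (H.a_mul_int hn ξ τ)
    linarith

end

section
variable {d : ℕ} {a : (Fin d → ℝ) → ℝ} {μ : (Fin d → ℝ) → (Fin d → ℝ) → ℝ → ℝ} {μm μp : ℝ}

lemma Setup.Be_lower (H : Setup a μ μm μp) {W : (Fin d → ℝ) → ℝ → ℝ≥0∞}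
    (hW : Measurable (fun p : (Fin d → ℝ) × ℝ => W p.1 p.2)) (ξ : Fin d → ℝ) (τ : ℝ) :
    ENNReal.ofReal μm * ∫⁻ η, ENNReal.ofReal (a (ξ - η)) * W η τ ≤ Be a μ μp W ξ τ := by
  have h1 := H.ameas
  have hm' : Measurable (fun η => W η τ) := hW.comp (by fun_prop : Measurable fun η => (η, τ))
  rw [← lintegral_const_mul _ (by fun_prop)]
  apply lintegral_mono
  intro η
  calc _ = ENNReal.ofReal (a (ξ - η)) * (ENNReal.ofReal μm * W η τ + 0) := by ring
    _ ≤ _ := mul_le_mul' le_rfl (add_le_add (mul_le_mul'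
      (ENNReal.ofReal_le_ofReal (H.mlb _ _ _)) le_rfl) zero_le)

lemma Setup.Br_enorm (H : Setup a μ μm μp) (f : (Fin d → ℝ) → ℝ → ℝ) (ξ τ) :
    ‖Br a μ μp f ξ τ‖ₑ ≤ Be a μ μp (fun η s => ‖f η s‖ₑ) ξ τ := by
  refine (enorm_integral_le_lintegral_enorm _).trans (lintegral_mono fun η => ?_)
  rw [enorm_mul, Real.enorm_eq_ofReal (H.ann _)]
  refine mul_le_mul' le_rfl ((enorm_add_le _ _).trans ?_)
  rw [enorm_mul, enorm_mul, Real.enorm_eq_ofReal (H.mnn _ _ _),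
    Real.enorm_eq_ofReal (sub_nonneg.mpr (H.mub ξ η τ))]

/-- almost everywhere finiteness facts for periodic `L¹` functions -/
lemma Setup.ae_fin (H : Setup a μ μm μp) {β : (Fin d → ℝ) → ℝ → ℝ}
    (hm : Measurable (fun p : (Fin d → ℝ) × ℝ => β p.1 p.2))
    (hper : ∀ ξ s, ∀ k : Fin d → ℤ, β (ξ + fun i => (k i : ℝ)) s = β ξ s)
    (hInt : IntegrableOn (fun p : (Fin d → ℝ) × ℝ => β p.1 p.2) (cube d ×ˢ Ioo (0:ℝ) 1)) :
    ∀ᵐ ξ ∂(volume.restrict (cube d)), IntegrableOn (β ξ) (Ioo 0 1) ∧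
      IntegrableOn (Br a μ μp β ξ) (Ioo 0 1) ∧
      ∀ᵐ τ ∂(volume.restrict (Ioo (0:ℝ) 1)), Integrable (fun η => a (ξ - η) * β η τ) := by
  have hmW : Measurable (fun p : (Fin d → ℝ) × ℝ => ‖β p.1 p.2‖ₑ) := hm.enorm
  have hB := H.Be_meas (W := fun η s => ‖β η s‖ₑ) hmW
  have hfin : ∫⁻ ξ in cube d, ∫⁻ s in Ioo (0:ℝ) 1, ‖β ξ s‖ₑ ≠ ∞ := by
    rw [← lint_cell (W := fun η s => ‖β η s‖ₑ) hmW]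
    exact hInt.hasFiniteIntegral.ne
  have hfinB : ∫⁻ ξ in cube d, ∫⁻ s in Ioo (0:ℝ) 1, Be a μ μp (fun η s => ‖β η s‖ₑ) ξ s ≠ ∞ := by
    rw [lintegral_lintegral_swap hB.aemeasurable]
    simp_rw [fun τ => H.Be_cons (W := fun η s => ‖β η s‖ₑ) hmW τ
      (fun ξ k => by simp only [hper])]
    have hsw : Measurable (fun τ => ∫⁻ ξ in cube d, ‖β ξ τ‖ₑ) :=
      (hmW.comp measurable_swap).lintegral_prod_right'
    rw [lintegral_const_mul _ hsw, ← lintegral_lintegral_swap hmW.aemeasurable]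
    exact ENNReal.mul_ne_top (by simp) hfin
  filter_upwards [ae_lt_top hmW.lintegral_prod_right' hfin,
    ae_lt_top hB.lintegral_prod_right' hfinB] with ξ h1 h2
  refine ⟨⟨(curry_meas hm ξ).aestronglyMeasurable, h1⟩,
    ⟨(curry_meas (H.Br_meas hm) ξ).aestronglyMeasurable,
      (lintegral_mono fun τ => H.Br_enorm β ξ τ).trans_lt h2⟩, ?_⟩
  filter_upwards [ae_lt_top (curry_meas hB ξ) h2.ne] with τ h3
  have h4 := (H.Be_lower hmW ξ τ).trans_lt h3
  have ham := H.ameas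
  have hmτ : Measurable (fun η => β η τ) := hm.comp (by fun_prop : Measurable fun η => (η, τ))
  refine ⟨by fun_prop, ?_⟩
  have h5 : ∫⁻ η, ENNReal.ofReal (a (ξ - η)) * ‖β η τ‖ₑ < ∞ := by
    by_contra hh
    rw [not_lt, top_le_iff] at hh
    simp only [hh] at h4
    rw [ENNReal.mul_top (by simpa using H.mpos)] at h4
    exact lt_irrefl _ h4
  refine lt_of_eq_of_lt ?_ h5
  congr 1; ext η
  rw [enorm_mul, Real.enorm_eq_ofReal (H.ann _)]

lemma sol_int {θ β : (Fin d → ℝ) → ℝ → ℝ} (h : IsCellSol a μ θ β) :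
    IntegrableOn (fun p : (Fin d → ℝ) × ℝ => β p.1 p.2) (cube d ×ˢ Ioo (0:ℝ) 1) := by
  obtain ⟨hm, -, -, h2, -⟩ := h
  have hc : Integrable (fun _ : (Fin d → ℝ) × ℝ => (1:ℝ))
      (volume.restrict (cube d ×ˢ Ioo (0:ℝ) 1)) := integrableOn_const (by simp [vol_cell])
  refine (hc.add h2).mono' hm.aestronglyMeasurable (Filter.Eventually.of_forall fun p => ?_)
  simp only [Pi.add_apply, Real.norm_eq_abs]
  rw [abs_le]; constructor <;> nlinarith [sq_nonneg (β p.1 p.2 + 1), sq_nonneg (β p.1 p.2 - 1)]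

lemma Setup.sol_repr (H : Setup a μ μm μp) {R : ℝ} {θ β : (Fin d → ℝ) → ℝ → ℝ} (hθ : Nice R θ)
    (h : IsCellSol a μ θ β) :
    ∀ᵐ ξ ∂(volume.restrict (cube d)), IntegrableOn (Br a μ μp β ξ) (Ioo 0 1) ∧
      (∀ᵐ τ ∂(volume.restrict (Ioo (0:ℝ) 1)), Integrable (fun η => a (ξ - η) * β η τ)) ∧
      ∀ s ∈ Icc (0:ℝ) 1, β ξ s = Sr μp (fun τ => Br a μ μp β ξ τ + θ ξ τ) s := by
  have hi := sol_int h
  obtain ⟨hm, hper, htper, -, heq⟩ := h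
  filter_upwards [H.ae_fin hm hper hi, ae_restrict_of_ae heq] with ξ h1 h2
  obtain ⟨hb, hB, hae⟩ := h1
  refine ⟨hB, hae, fun s hs => ?_⟩
  refine ode_U H.ppos (hB.add (hθ.intOn ξ)) ?_ hb (by simpa using htper ξ 0) hs
  intro s hs
  rw [h2 s hs]
  congr 1
  rw [intervalIntegral.integral_of_le hs.1, intervalIntegral.integral_of_le hs.1,
    integral_Ioc_eq_integral_Ioo, integral_Ioc_eq_integral_Ioo]
  apply integral_congr_ae
  have hae' := ae_mono (Measure.restrict_mono (Ioo_subset_Ioo_right hs.2) le_rfl) hae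
  filter_upwards [hae'] with τ hτ
  have := H.Br_eq hτ
  simp only [Pi.add_apply]
  linarith

lemma Setup.unique (H : Setup a μ μm μp) {R : ℝ} {θ β β' : (Fin d → ℝ) → ℝ → ℝ} (hθ : Nice R θ)
    (h : IsCellSol a μ θ β) (h' : IsCellSol a μ θ β') (h0 : mn β = 0) (h0' : mn β' = 0) :
    ∀ᵐ p ∂(volume.restrict (cube d ×ˢ Ioo (0:ℝ) 1)),
      β' (Prod.fst p) (Prod.snd p) = β (Prod.fst p) (Prod.snd p) := by
  have hl := H.ppos
  set w : (Fin d → ℝ) → ℝ → ℝ := fun ξ s => β' ξ s - β ξ s with hw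
  have hwm : Measurable (fun p : (Fin d → ℝ) × ℝ => w p.1 p.2) := h'.1.sub h.1
  have hwper : ∀ ξ s, ∀ k : Fin d → ℤ, w (ξ + fun i => (k i : ℝ)) s = w ξ s := by
    intro ξ s k; simp only [hw, h.2.1, h'.2.1]
  have hwint : IntegrableOn (fun p : (Fin d → ℝ) × ℝ => w p.1 p.2) (cube d ×ˢ Ioo (0:ℝ) 1) :=
    (sol_int h').sub (sol_int h)
  have hw0 : ∫ p in cube d ×ˢ Ioo (0:ℝ) 1, w p.1 p.2 = 0 := by
    simp only [hw]
    rw [integral_sub (sol_int h') (sol_int h)]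
    unfold mn at h0 h0'
    rw [h0, h0', sub_zero]
  -- representation of w
  have hrep : ∀ᵐ ξ ∂(volume.restrict (cube d)), ∀ s ∈ Icc (0:ℝ) 1,
      w ξ s = Sr μp (Br a μ μp w ξ) s := by
    filter_upwards [H.sol_repr hθ h, H.sol_repr hθ h'] with ξ h1 h2 s hs
    obtain ⟨hB, hae, hr⟩ := h1
    obtain ⟨hB', hae', hr'⟩ := h2
    simp only [hw]
    rw [hr s hs, hr' s hs, Sr_add hl hB (hθ.intOn ξ), Sr_add hl hB' (hθ.intOn ξ),
      add_sub_add_right_eq_sub]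
    unfold Sr
    rw [← integral_sub (gk_mul_integrable hl hB' (fract_mem s))
      (gk_mul_integrable hl hB (fract_mem s))]
    apply integral_congr_ae
    filter_upwards [hae, hae'] with τ h3 h4
    rw [← mul_sub]
    congr 1
    unfold Br
    rw [← integral_sub (H.Br_int h4) (H.Br_int h3)]
    congr 1; ext η; ring
  -- the positive part
  set W : (Fin d → ℝ) → ℝ → ℝ≥0∞ := fun ξ s => ENNReal.ofReal (w ξ s) with hW
  have hWm : Measurable (fun p : (Fin d → ℝ) × ℝ => W p.1 p.2) := hwm.ennreal_ofReal
  have hWper : ∀ τ, SPer (fun ξ => W ξ τ) := fun τ ξ k => by simp only [hW, hwper]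
  have hPm := H.Pe_meas hWm
  have hcell : (volume : Measure ((Fin d → ℝ) × ℝ)).restrict (cube d ×ˢ Ioo (0:ℝ) 1) =
      (volume.restrict (cube d)).prod (volume.restrict (Ioo (0:ℝ) 1)) := by
    rw [Measure.volume_eq_prod, Measure.prod_restrict]
  have hle : ∀ᵐ p ∂(volume.restrict (cube d ×ˢ Ioo (0:ℝ) 1)),
      W (Prod.fst p) (Prod.snd p) ≤ Pe a μ μp W p.1 p.2 := by
    rw [hcell, Measure.ae_prod_iff_ae_ae (measurableSet_le hWm hPm)]
    filter_upwards [hrep] with ξ h1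
    filter_upwards [ae_restrict_mem measurableSet_Ioo] with s hs
    simp only [hW]
    rw [h1 s ⟨hs.1.le, hs.2.le⟩]
    refine (Sr_ofReal_le hl _ s).trans ?_
    unfold Pe Se
    exact lintegral_mono fun τ => mul_le_mul' le_rfl (H.Br_le w ξ τ)
  have hWfin : ∫⁻ p in cube d ×ˢ Ioo (0:ℝ) 1, W p.1 p.2 ≠ ∞ := by
    refine ((lintegral_mono fun p => ?_).trans_lt hwint.hasFiniteIntegral).ne
    exact Real.ofReal_le_enorm _
  have heq := ae_eq_of_ae_le_of_lintegral_le hle hWfin hPm.aemeasurable (by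
    rw [lint_cell hWm, lint_cell hPm, H.Pe_cons hWm hWper])
  set F : (Fin d → ℝ) → ℝ≥0∞ := fun η => ∫⁻ τ in Ioo (0:ℝ) 1, W η τ with hF
  have hFm : Measurable F := hWm.lintegral_prod_right'
  have hFper : SPer F := fun ξ k => by simp only [hF, hW, hwper]
  have hlow : ∀ᵐ p ∂(volume.restrict (cube d ×ˢ Ioo (0:ℝ) 1)),
      ENNReal.ofReal (c1 μm μp) * Te a F (Prod.fst p) ≤ W (Prod.fst p) (Prod.snd p) := by
    filter_upwards [heq] with p hp
    rw [hp]
    exact H.Pe_lower hWm p.1 p.2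
  have hTper : ∀ g : (Fin d → ℝ) → ℝ≥0∞, SPer g → SPer (Te a g) := by
    intro g hg ξ k
    unfold Te
    rw [← lintegral_add_right_eq_self _ (fun i => (k i : ℝ))]
    congr 1; ext η
    rw [add_sub_add_right_eq_sub, hg]
  have hFlow : ∀ᵐ ξ : Fin d → ℝ, ENNReal.ofReal (c1 μm μp) * Te a F ξ ≤ F ξ := by
    apply SPer.ae_of_cube
    · intro ξ k
      simp only [hTper F hFper ξ k, hFper ξ k]
    · rw [hcell] at hlow
      filter_upwards [Measure.ae_ae_of_ae_prod hlow] with ξ h1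
      calc _ = ∫⁻ τ in Ioo (0:ℝ) 1, ENNReal.ofReal (c1 μm μp) * Te a F ξ := by simp
        _ ≤ _ := lintegral_mono_ae h1
  have hiter : ∀ n, ∀ᵐ ξ : Fin d → ℝ, ENNReal.ofReal (c1 μm μp) ^ n * (Te a)^[n] F ξ ≤ F ξ := by
    intro n
    induction n with
    | zero => simp
    | succ n ih =>
      filter_upwards [hFlow] with ξ h1
      refine le_trans ?_ h1
      rw [Function.iterate_succ_apply', pow_succ', mul_assoc]
      refine mul_le_mul' le_rfl ?_
      rw [← Te_const_mul H.ameas (Te_iter_meas H.ameas hFm _)]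
      exact Te_mono ih ξ
  obtain ⟨n, -, ε, hε, hs⟩ := spread_cube H.ameas H.ann H.amass H.asymm
  have hFc : ∀ᵐ ξ : Fin d → ℝ, ENNReal.ofReal (c1 μm μp) ^ n *
      (ENNReal.ofReal ε * ∫⁻ η in cube d, F η) ≤ F ξ := by
    filter_upwards [hiter n] with ξ h1
    exact (mul_le_mul' le_rfl (hs F hFm hFper ξ)).trans h1
  set c := ENNReal.ofReal (c1 μm μp) ^ n * (ENNReal.ofReal ε * ∫⁻ η in cube d, F η) with hc
  have hTc : ∀ ξ, c ≤ Te a F ξ := by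
    intro ξ
    refine le_trans ?_ (Te_mono hFc ξ)
    have ham := H.ameas
    unfold Te
    rw [lintegral_mul_const _ (by fun_prop), H.lmass, one_mul]
  have hne : (volume : Measure ((Fin d → ℝ) × ℝ)).restrict (cube d ×ˢ Ioo (0:ℝ) 1) ≠ 0 := by
    intro hz
    have := congrArg (fun m => m univ) hz
    simp [vol_cell] at this
  have hF0 : ∫⁻ η in cube d, F η = 0 := by
    by_contra hF1
    have hc0 : c ≠ 0 := by
      have := H.c1_pos
      rw [hc]
      refine mul_ne_zero (pow_ne_zero _ (by simpa using this)) (mul_ne_zero (by simpa using hε) hF1)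
    have hpos : ∀ᵐ p ∂(volume.restrict (cube d ×ˢ Ioo (0:ℝ) 1)), 0 < w (Prod.fst p) (Prod.snd p) := by
      filter_upwards [hlow] with p hp
      rw [← ENNReal.ofReal_pos]
      refine lt_of_lt_of_le (pos_iff_ne_zero.mpr ?_) hp
      refine mul_ne_zero (by simpa using H.c1_pos) ?_
      exact (lt_of_lt_of_le (pos_iff_ne_zero.mpr hc0) (hTc _)).ne'
    rw [integral_eq_zero_iff_of_nonneg_ae (hpos.mono fun p hp => hp.le) hwint] at hw0
    have : ∀ᵐ p ∂(volume.restrict (cube d ×ˢ Ioo (0:ℝ) 1)), False := by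
      filter_upwards [hpos, hw0] with p h1 h2
      simp only [Pi.zero_apply] at h2
      exact h1.ne' h2
    rw [Filter.eventually_false_iff_eq_bot, ae_eq_bot] at this
    exact hne this
  have hneg : ∀ᵐ p ∂(volume.restrict (cube d ×ˢ Ioo (0:ℝ) 1)), w (Prod.fst p) (Prod.snd p) ≤ 0 := by
    rw [← lint_cell hWm, lintegral_eq_zero_iff hWm] at hF0
    filter_upwards [hF0] with p hp
    exact ENNReal.ofReal_eq_zero.mp hp
  have hw1 : ∫ p in cube d ×ˢ Ioo (0:ℝ) 1, -w p.1 p.2 = 0 := by rw [integral_neg, hw0, neg_zero]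
  rw [integral_eq_zero_iff_of_nonneg_ae (f := fun p : (Fin d → ℝ) × ℝ => -w p.1 p.2)
    (hneg.mono fun p hp => by simpa using hp) hwint.neg] at hw1
  filter_upwards [hw1] with p hp
  simp only [Pi.zero_apply, hw] at hp
  linarith

end

end

/-- Each `q_j` is well defined, bounded (in `L^∞(𝕋^{d+1})`), has zero mean over `𝕋^d`
for a.e. `s`, and the corrector equation `∂_s χ_j - A(s)χ_j = q_j` has a time-periodic
solution, unique under the normalization `∫_{𝕋^{d+1}} χ_j = 0`. -/
theorem stmt13 {d : ℕ} (hd : 1 ≤ d)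
    (a : (Fin d → ℝ) → ℝ) (μ : (Fin d → ℝ) → (Fin d → ℝ) → ℝ → ℝ) (μm μp : ℝ)
    (hameas : Measurable a) (hanonneg : ∀ z, 0 ≤ a z)
    (haint : Integrable a) (hamass : ∫ z, a z = 1)
    (hamom : Integrable (fun z => ‖z‖ ^ 2 * a z))
    (hasymm : ∀ z, a (-z) = a z)
    (hμmeas : Measurable fun p : (Fin d → ℝ) × (Fin d → ℝ) × ℝ => μ p.1 p.2.1 p.2.2)
    (hμper₁ : ∀ ξ η s, ∀ k : Fin d → ℤ, μ (ξ + fun i => (k i : ℝ)) η s = μ ξ η s)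
    (hμper₂ : ∀ ξ η s, ∀ k : Fin d → ℤ, μ ξ (η + fun i => (k i : ℝ)) s = μ ξ η s)
    (hμper₃ : ∀ ξ η s, μ ξ η (s + 1) = μ ξ η s)
    (hμsymm : ∀ ξ η s, μ ξ η s = μ η ξ s)
    (hμm : 0 < μm) (hμlb : ∀ ξ η s, μm ≤ μ ξ η s) (hμub : ∀ ξ η s, μ ξ η s ≤ μp) :
    (∀ (j : Fin d) (ξ : Fin d → ℝ) (s : ℝ),
      Integrable fun η => a (ξ - η) * μ ξ η s * (η j - ξ j)) ∧
    (∃ M : ℝ, ∀ (j : Fin d) (ξ : Fin d → ℝ) (s : ℝ), |qfun a μ j ξ s| ≤ M) ∧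
    (∀ j : Fin d, ∀ᵐ s ∂(volume : Measure ℝ),
      (∫ ξ in cube d, qfun a μ j ξ s) = 0) ∧
    (∀ j : Fin d, ∃ χ, IsCellSol a μ (qfun a μ j) χ ∧
      (∫ p in cube d ×ˢ Set.Ioo (0 : ℝ) 1, χ (Prod.fst p) (Prod.snd p)) = 0 ∧
      ∀ χ', IsCellSol a μ (qfun a μ j) χ' →
        (∫ p in cube d ×ˢ Set.Ioo (0 : ℝ) 1, χ' (Prod.fst p) (Prod.snd p)) = 0 →
        ∀ᵐ p ∂(volume.restrict (cube d ×ˢ Set.Ioo (0 : ℝ) 1)),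
          χ' (Prod.fst p) (Prod.snd p) = χ (Prod.fst p) (Prod.snd p)) := by
  have H : Setup a μ μm μp := ⟨hameas, hanonneg, haint, hamass, hamom, hasymm, hμmeas, hμper₁,
    hμper₂, hμper₃, hμsymm, hμm, hμlb, hμub⟩
  refine ⟨H.q_int, ⟨_, H.q_bd⟩, fun j => Filter.Eventually.of_forall (H.q_mean j), fun j => ?_⟩
  obtain ⟨χ, h1, h2⟩ := H.exists_sol (H.q_nice j) (H.q_mn j)
  exact ⟨χ, h1, h2, fun χ' h1' h2' => H.unique (H.q_nice j) h1 h1' h2 h2'⟩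
end
end

section
/- The effective matrix a^eff is positive definite: there exists c > 0 such that (a^eff ζ) · ζ ≥ c |ζ|² for all ζ ∈ ℝ^d. -/
open MeasureTheory

noncomputable section

lemma fract_pres (c : ℝ) : MeasurePreserving (fun x : ℝ => Int.fract (x + c))
    (volume.restrict (Set.Ico (0:ℝ) 1)) (volume.restrict (Set.Ico (0:ℝ) 1)) := by
  refine ⟨by fun_prop, ?_⟩
  ext S hS
  have hm : Measurable (fun x : ℝ => Int.fract (x + c)) := by fun_prop
  rw [Measure.map_apply hm hS]
  have e1 : (volume.restrict (Set.Ico (0:ℝ) 1)) = (volume.restrict (Set.Ioc (0:ℝ) 1)) :=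
    Measure.restrict_congr_set Ico_ae_eq_Ioc
  set U : Set ℝ := Int.fract ⁻¹' S with hU
  have hUm : MeasurableSet U := measurable_fract hS
  have e2 : volume.restrict (Set.Ico (0:ℝ) 1) S = volume.restrict (Set.Ioc (0:ℝ) 1) U := by
    rw [← e1, Measure.restrict_apply hS, Measure.restrict_apply hUm]
    congr 1
    ext x
    simp only [Set.mem_inter_iff, hU, Set.mem_preimage]
    constructor
    · rintro ⟨h1, h2⟩; rw [Int.fract_eq_self.2 h2]; exact ⟨h1, h2⟩
    · rintro ⟨h1, h2⟩; rw [Int.fract_eq_self.2 h2] at h1; exact ⟨h1, h2⟩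
  rw [e2, e1, Measure.restrict_apply (hm hS), Measure.restrict_apply hUm]
  have e3 : (fun x : ℝ => Int.fract (x + c)) ⁻¹' S ∩ Set.Ioc 0 1
      = (fun x => x + c) ⁻¹' (U ∩ Set.Ioc c (c+1)) := by
    ext x
    simp only [Set.mem_inter_iff, hU, Set.mem_preimage, Set.mem_Ioc]
    constructor
    · rintro ⟨h1, h2, h3⟩; exact ⟨h1, by linarith, by linarith⟩
    · rintro ⟨h1, h2, h3⟩; exact ⟨h1, by linarith, by linarith⟩
  rw [e3, measure_preimage_add_right]
  have := (isAddFundamentalDomain_Ioc one_pos c (volume : Measure ℝ)).measure_set_eq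
    (isAddFundamentalDomain_Ioc one_pos 0 (volume : Measure ℝ)) hUm (by
      rintro ⟨g, hg⟩
      obtain ⟨n, rfl⟩ := AddSubgroup.mem_zmultiples_iff.1 hg
      ext x
      simp [hU, AddSubgroup.vadd_def])
  simpa using this

lemma ode_zero (f g : ℝ → ℝ) (hg : IntervalIntegrable g volume 0 1)
    (hf : ∀ s ∈ Set.Icc (0:ℝ) 1, f s = f 0 + ∫ τ in (0:ℝ)..s, g τ) (h1 : f 1 = f 0) :
    ∫ s in (0:ℝ)..1, f s * g s = 0 := by
  set F : ℝ → ℝ := fun s => ∫ τ in (0:ℝ)..s, g τ with hF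
  have hac : AbsolutelyContinuousOnInterval F 0 1 :=
    hg.absolutelyContinuousOnInterval_intervalIntegral (by simp)
  have hF1 : F 1 = 0 := by
    have := hf 1 (by simp); simp only [hF]; linarith
  have hF0 : F 0 = 0 := by simp [hF]
  have hd := hg.ae_hasDerivAt_integral
  have key := hac.integral_deriv_mul_eq_sub hac
  have e : ∫ x in (0:ℝ)..1, (deriv F x * F x + F x * deriv F x) = ∫ x in (0:ℝ)..1, 2 * (F x * g x) := by
    apply intervalIntegral.integral_congr_ae
    filter_upwards [hd] with x hx hxm
    rw [(hx (Set.uIoc_subset_uIcc hxm) 0 (by simp)).deriv]; ring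
  rw [e, hF1, hF0, intervalIntegral.integral_const_mul] at key
  have e2 : ∫ s in (0:ℝ)..1, f s * g s = ∫ s in (0:ℝ)..1, (f 0 * g s + F s * g s) := by
    apply intervalIntegral.integral_congr
    intro s hs
    rw [Set.uIcc_of_le zero_le_one] at hs
    simp only [hf s hs, hF]; rw [hf 0 (by simp)]; simp; ring
  rw [e2, intervalIntegral.integral_add (hg.const_mul _) (hg.continuousOn_mul hac.continuousOn),
    intervalIntegral.integral_const_mul]
  change f 0 * F 1 + _ = 0
  rw [hF1]; linarith

lemma MeasureTheory.Integrable.fsub {Ω : Type*} [MeasurableSpace Ω] {P : Measure Ω} {f g : Ω → ℝ}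
    (hf : Integrable f P) (hg : Integrable g P) : Integrable (fun x => f x - g x) P := hf.sub hg

lemma int_w {Ω : Type*} [MeasurableSpace Ω] {P : Measure Ω} {w U V : Ω → ℝ} {K : ℝ}
    (hw : Measurable w) (hK : ∀ x, |w x| ≤ K) (hU : MemLp U 2 P) (hV : MemLp V 2 P) :
    Integrable (fun x => w x * (U x * V x)) P := by
  have h : Integrable (fun x => U x * V x) P := hU.integrable_mul hV
  exact h.bdd_mul hw.aestronglyMeasurable (Filter.Eventually.of_forall hK)

lemma quad {Ω : Type*} [MeasurableSpace Ω] {P : Measure Ω} {w X Y L : Ω → ℝ} {K : ℝ}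
    (Φ : Ω → Ω) (hΦ : MeasurePreserving Φ P P)
    (hw : Measurable w) (hK : ∀ x, |w x| ≤ K)
    (hX : MemLp X 2 P) (hY : MemLp Y 2 P) (hL : MemLp L 2 P)
    (hwΦ : ∀ x, w (Φ x) = w x) (hXΦ : ∀ x, X (Φ x) = Y x) (hYΦ : ∀ x, Y (Φ x) = X x)
    (hLΦ : ∀ x, L (Φ x) = - L x)
    (h0 : ∫ x, w x * (X x * (Y x - X x - L x)) ∂P = 0) :
    ∫ x, w x * (1/2 * L x * L x - L x * Y x) ∂P
      = 1/2 * ∫ x, w x * (L x - (Y x - X x))^2 ∂P := by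
  have hi := fun {U V : Ω → ℝ} (hU : MemLp U 2 P) (hV : MemLp V 2 P) => int_w hw hK hU hV
  have comp : ∀ {U V : Ω → ℝ}, MemLp U 2 P → MemLp V 2 P →
      ∫ x, w x * (U (Φ x) * V (Φ x)) ∂P = ∫ x, w x * (U x * V x) ∂P := by
    intro U V hU hV
    have h1 := integral_map (μ := P) hΦ.measurable.aemeasurable
      (f := fun x => w x * (U x * V x)) (by rw [hΦ.map_eq]; exact (hi hU hV).aestronglyMeasurable)
    rw [hΦ.map_eq] at h1
    rw [h1]; simp [hwΦ]
  have c1 := comp hX hX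
  have c2 := comp hX hL
  simp only [hXΦ, hLΦ] at c1 c2
  have c2' : ∫ x, w x * (L x * Y x) ∂P = - ∫ x, w x * (L x * X x) ∂P := by
    rw [← integral_neg]
    have : ∫ x, w x * (Y x * - L x) ∂P = - ∫ x, w x * (L x * Y x) ∂P := by
      rw [← integral_neg]; congr 1; ext x; ring
    have h3 : ∫ x, w x * (X x * L x) ∂P = ∫ x, w x * (L x * X x) ∂P := by
      congr 1; ext x; ring
    rw [integral_neg, ← h3, ← c2, this, neg_neg]
  have e0 : ∫ x, w x * (X x * (Y x - X x - L x)) ∂P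
      = ∫ x, w x * (X x * Y x) ∂P - ∫ x, w x * (X x * X x) ∂P - ∫ x, w x * (L x * X x) ∂P := by
    rw [← integral_sub (hi hX hY) (hi hX hX), ← integral_sub ((hi hX hY).fsub (hi hX hX)) (hi hL hX)]
    congr 1; ext x; ring
  have e1 : ∫ x, w x * (1/2 * L x * L x - L x * Y x) ∂P
      = 1/2 * ∫ x, w x * (L x * L x) ∂P - ∫ x, w x * (L x * Y x) ∂P := by
    rw [← integral_const_mul, ← integral_sub ((hi hL hL).const_mul _) (hi hL hY)]
    congr 1; ext x; ring
  have e2 : ∫ x, w x * (L x - (Y x - X x))^2 ∂P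
      = ∫ x, w x * (L x * L x) ∂P + ∫ x, w x * (Y x * Y x) ∂P + ∫ x, w x * (X x * X x) ∂P
        - 2 * ∫ x, w x * (L x * Y x) ∂P + 2 * ∫ x, w x * (L x * X x) ∂P
        - 2 * ∫ x, w x * (X x * Y x) ∂P := by
    rw [← integral_const_mul, ← integral_const_mul, ← integral_const_mul,
      ← integral_add (hi hL hL) (hi hY hY),
      ← integral_add ((hi hL hL).fun_add (hi hY hY)) (hi hX hX),
      ← integral_sub (((hi hL hL).fun_add (hi hY hY)).fun_add (hi hX hX)) ((hi hL hY).const_mul _),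
      ← integral_add ((((hi hL hL).fun_add (hi hY hY)).fun_add (hi hX hX)).fsub ((hi hL hY).const_mul _))
        ((hi hL hX).const_mul _),
      ← integral_sub (((((hi hL hL).fun_add (hi hY hY)).fun_add (hi hX hX)).fsub
        ((hi hL hY).const_mul _)).fun_add ((hi hL hX).const_mul _)) ((hi hX hY).const_mul _)]
    congr 1; ext x; ring
  rw [e1, e2]
  rw [e0] at h0
  linarith

def sig : Measure ℝ := volume.restrict (Set.Ioo (0:ℝ) 1)
def Cm (d : ℕ) : Measure (Fin d → ℝ) := volume.restrict (cube d)
def Am {d : ℕ} (a : (Fin d → ℝ) → ℝ) : Measure (Fin d → ℝ) :=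
  volume.withDensity (fun z => ENNReal.ofReal (a z))
def fr {d : ℕ} (x : Fin d → ℝ) : Fin d → ℝ := fun i => Int.fract (x i)

instance : IsProbabilityMeasure sig := ⟨by simp [sig]⟩
instance (d : ℕ) : IsProbabilityMeasure (Cm d) := ⟨by
  simp [Cm, cube, volume_pi, Measure.pi_pi]⟩
lemma Am_prob {d : ℕ} {a : (Fin d → ℝ) → ℝ} (h0 : ∀ z, 0 ≤ a z) (hi : Integrable a)
    (h1 : ∫ z, a z = 1) : IsProbabilityMeasure (Am a) := ⟨by
  rw [Am, withDensity_apply _ MeasurableSet.univ, Measure.restrict_univ,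
    ← ofReal_integral_eq_lintegral_ofReal hi (Filter.Eventually.of_forall h0), h1]; simp⟩

lemma fr_add {d : ℕ} {α : Type*} {f : (Fin d → ℝ) → α}
    (hf : ∀ ξ, ∀ k : Fin d → ℤ, f (ξ + fun i => (k i : ℝ)) = f ξ) (x y : Fin d → ℝ) :
    f (fr x + y) = f (x + y) := by
  rw [← hf (fr x + y) (fun i => ⌊x i⌋)]
  congr 1; ext i; simp only [fr, Pi.add_apply]; have := Int.fract_add_floor (x i); linarith

lemma fr_per {d : ℕ} {α : Type*} {f : (Fin d → ℝ) → α}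
    (hf : ∀ ξ, ∀ k : Fin d → ℤ, f (ξ + fun i => (k i : ℝ)) = f ξ) (x : Fin d → ℝ) :
    f (fr x) = f x := by
  simpa using fr_add hf x 0

lemma meas_fr {d : ℕ} : Measurable (fr : (Fin d → ℝ) → (Fin d → ℝ)) :=
  measurable_pi_iff.2 fun i => measurable_fract.comp (measurable_pi_apply i)

lemma fr_pres {d : ℕ} (c : Fin d → ℝ) : MeasurePreserving (fun x => fr (x + c)) (Cm d) (Cm d) := by
  have : Cm d = Measure.pi (fun _ : Fin d => volume.restrict (Set.Ico (0:ℝ) 1)) := by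
    rw [Cm, cube, volume_pi, Measure.restrict_pi_pi]
  rw [this]
  exact measurePreserving_pi _ _ (fun i => fract_pres (c i))

/-- The reflection `(s,ξ,z) ↦ (s, ξ+z, -z)`. -/
def Phi {d : ℕ} (p : (ℝ × (Fin d → ℝ)) × (Fin d → ℝ)) : (ℝ × (Fin d → ℝ)) × (Fin d → ℝ) :=
  ((p.1.1, fr (p.1.2 + p.2)), -p.2)

lemma neg_pres {d : ℕ} {a : (Fin d → ℝ) → ℝ} (ha : Measurable a) (hs : ∀ z, a (-z) = a z) :
    MeasurePreserving (fun z : Fin d → ℝ => -z) (Am a) (Am a) := by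
  refine ⟨measurable_neg, ?_⟩
  ext S hS
  rw [Measure.map_apply measurable_neg hS, Am, withDensity_apply _ (measurable_neg hS),
    withDensity_apply _ hS]
  have := (Measure.measurePreserving_neg (volume : Measure (Fin d → ℝ))).setLIntegral_comp_preimage
    hS (f := fun z => ENNReal.ofReal (a z)) ha.ennreal_ofReal
  rw [← this]
  simp [hs]

lemma Phi_pres {d : ℕ} {a : (Fin d → ℝ) → ℝ} [IsProbabilityMeasure (Am a)]
    (ha : Measurable a) (hs : ∀ z, a (-z) = a z) :
    MeasurePreserving (Phi (d := d)) ((sig.prod (Cm d)).prod (Am a))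
      ((sig.prod (Cm d)).prod (Am a)) := by
  have h := (neg_pres ha hs).skew_product (μc := sig.prod (Cm d)) (μd := sig.prod (Cm d))
    (g := fun z p => (p.1, fr (p.2 + z))) (by
      refine (measurable_fst.comp measurable_snd).prodMk (meas_fr.comp ?_)
      exact (measurable_snd.comp measurable_snd).add measurable_fst)
    (Filter.Eventually.of_forall fun z =>
      ((MeasurePreserving.id sig).prod (fr_pres z)).map_eq)
  exact (Measure.measurePreserving_swap.comp h).comp Measure.measurePreserving_swap

section main
variable {d : ℕ} {a : (Fin d → ℝ) → ℝ} {μ : (Fin d → ℝ) → (Fin d → ℝ) → ℝ → ℝ}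

lemma conv_int (hameas : Measurable a) (hanonneg : ∀ z, 0 ≤ a z) (hasymm : ∀ z, a (-z) = a z)
    (F : (Fin d → ℝ) → ℝ) (ξ : Fin d → ℝ) :
    ∫ η, a (ξ - η) * F η = ∫ z, F (ξ + z) ∂(Am a) := by
  rw [Am, integral_withDensity_eq_integral_toReal_smul hameas.ennreal_ofReal (by simp),
    ← integral_add_left_eq_self _ ξ]
  congr 1; ext z
  rw [ENNReal.toReal_ofReal (hanonneg z), ← hasymm z]
  simp

abbrev PP (a : (Fin d → ℝ) → ℝ) : Measure ((ℝ × (Fin d → ℝ)) × (Fin d → ℝ)) :=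
  (sig.prod (Cm d)).prod (Am a)

lemma memX [IsProbabilityMeasure (Am a)] {β : (Fin d → ℝ) → ℝ → ℝ}
    (hm : Measurable (fun p : (Fin d → ℝ) × ℝ => β p.1 p.2))
    (hi : IntegrableOn (fun p : (Fin d → ℝ) × ℝ => (β p.1 p.2) ^ 2)
      (cube d ×ˢ Set.Ioo (0 : ℝ) 1)) :
    MemLp (fun p : (ℝ × (Fin d → ℝ)) × (Fin d → ℝ) => β p.1.2 p.1.1) 2 (PP a) := by
  have h1 : MemLp (fun p : (Fin d → ℝ) × ℝ => β p.1 p.2) 2 ((Cm d).prod sig) := by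
    rw [memLp_two_iff_integrable_sq hm.aestronglyMeasurable, Cm, sig, Measure.prod_restrict]
    exact hi
  have h2 : MemLp (fun p : ℝ × (Fin d → ℝ) => β p.2 p.1) 2 (sig.prod (Cm d)) :=
    h1.comp_measurePreserving Measure.measurePreserving_swap
  exact h2.comp_fst (Am a)

lemma memL [IsProbabilityMeasure (Am a)] (hameas : Measurable a) (hanonneg : ∀ z, 0 ≤ a z)
    (hamom : Integrable (fun z => ‖z‖ ^ 2 * a z)) (j : Fin d) :
    MemLp (fun p : (ℝ × (Fin d → ℝ)) × (Fin d → ℝ) => p.2 j) 2 (PP a) := by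
  have h1 : MemLp (fun z : Fin d → ℝ => z j) 2 (Am a) := by
    rw [memLp_two_iff_integrable_sq (measurable_pi_apply j).aestronglyMeasurable, Am,
      integrable_withDensity_iff_integrable_smul' hameas.ennreal_ofReal (by simp)]
    refine hamom.mono' (by fun_prop) (Filter.Eventually.of_forall fun z => ?_)
    rw [ENNReal.toReal_ofReal (hanonneg z), smul_eq_mul, Real.norm_eq_abs, abs_mul,
      abs_of_nonneg (hanonneg z), mul_comm, abs_of_nonneg (sq_nonneg _)]
    have := norm_le_pi_norm z j
    rw [Real.norm_eq_abs] at this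
    have h := hanonneg z
    rw [← sq_abs (z j)]
    gcongr
  exact h1.comp_snd (sig.prod (Cm d))

lemma memY [IsProbabilityMeasure (Am a)] (hameas : Measurable a) (hasymm : ∀ z, a (-z) = a z)
    {β : (Fin d → ℝ) → ℝ → ℝ}
    (hm : Measurable (fun p : (Fin d → ℝ) × ℝ => β p.1 p.2))
    (hper : ∀ ξ s, ∀ k : Fin d → ℤ, β (ξ + fun i => (k i : ℝ)) s = β ξ s)
    (hi : IntegrableOn (fun p : (Fin d → ℝ) × ℝ => (β p.1 p.2) ^ 2)
      (cube d ×ˢ Set.Ioo (0 : ℝ) 1)) :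
    MemLp (fun p : (ℝ × (Fin d → ℝ)) × (Fin d → ℝ) => β (p.1.2 + p.2) p.1.1) 2 (PP a) := by
  have h := (memX (a := a) hm hi).comp_measurePreserving (Phi_pres hameas hasymm)
  convert h using 2 with p
  simp only [Phi, Function.comp]
  exact (fr_per (f := fun x => β x p.1.1) (fun ξ k => hper ξ _ k) _).symm

/-- the energy identity -/
lemma energy [IsProbabilityMeasure (Am a)]
    (hameas : Measurable a) (hanonneg : ∀ z, 0 ≤ a z)
    (hamom : Integrable (fun z => ‖z‖ ^ 2 * a z))
    (hasymm : ∀ z, a (-z) = a z)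
    (hμmeas : Measurable fun p : (Fin d → ℝ) × (Fin d → ℝ) × ℝ => μ p.1 p.2.1 p.2.2)
    {K : ℝ} (hK : ∀ ξ η s, |μ ξ η s| ≤ K)
    (χ : Fin d → (Fin d → ℝ) → ℝ → ℝ)
    (hχ : ∀ j : Fin d, IsCellSol a μ (qfun a μ j) (χ j)) (ζ : Fin d → ℝ) :
    ∫ p, μ p.1.2 (p.1.2 + p.2) p.1.1 * ((∑ j, ζ j * χ j p.1.2 p.1.1) *
      ((∑ j, ζ j * χ j (p.1.2 + p.2) p.1.1) - (∑ j, ζ j * χ j p.1.2 p.1.1)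
        - (∑ j, ζ j * p.2 j))) ∂(PP a) = 0 := by
  set w : (ℝ × (Fin d → ℝ)) × (Fin d → ℝ) → ℝ := fun p => μ p.1.2 (p.1.2 + p.2) p.1.1 with hw
  have hwm : Measurable w := by
    have : Measurable (fun p : (ℝ × (Fin d → ℝ)) × (Fin d → ℝ) =>
      ((p.1.2, (p.1.2 + p.2, p.1.1)) : (Fin d → ℝ) × (Fin d → ℝ) × ℝ)) := by fun_prop
    exact hμmeas.comp this
  have hwK : ∀ p, |w p| ≤ K := fun p => hK _ _ _
  have mX := fun j => memX (a := a) (hχ j).1 (hχ j).2.2.2.1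
  have mY := fun j => memY hameas hasymm (hχ j).1 (hχ j).2.1 (hχ j).2.2.2.1
  have mL := memL hameas hanonneg hamom
  -- the right-hand side `G j`
  set G : Fin d → (ℝ × (Fin d → ℝ)) → ℝ :=
    fun j p => Aop a μ p.1 (fun η => χ j η p.1) p.2 + qfun a μ j p.2 p.1 with hG
  have G1 : ∀ j p, G j p = (∫ z, w (p, z) * (χ j (p.2 + z) p.1 - χ j p.2 p.1) ∂(Am a))
      - ∫ z, w (p, z) * z j ∂(Am a) := by
    intro j p
    simp only [hG, Aop, qfun, mul_assoc]
    rw [conv_int hameas hanonneg hasymm (fun η => μ p.2 η p.1 * (χ j η p.1 - χ j p.2 p.1)),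
      conv_int hameas hanonneg hasymm (fun η => μ p.2 η p.1 * (η j - p.2 j))]
    simp [hw, sub_eq_add_neg]
  have one : MemLp (fun _ : (ℝ × (Fin d → ℝ)) × (Fin d → ℝ) => (1:ℝ)) 2 (PP a) := memLp_const _
  have i1 : ∀ j, Integrable (fun p => w p * (χ j (p.1.2 + p.2) p.1.1 - χ j p.1.2 p.1.1)) (PP a) := by
    intro j
    simpa using int_w hwm hwK ((mY j).sub (mX j)) one
  have i2 : ∀ j, Integrable (fun p => w p * p.2 j) (PP a) := by
    intro j
    simpa using int_w hwm hwK (mL j) one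
  have iG : ∀ j, Integrable (G j) (sig.prod (Cm d)) := by
    intro j
    have := (i1 j).integral_prod_left.sub (i2 j).integral_prod_left
    refine this.congr (Filter.Eventually.of_forall fun p => ?_)
    simp [G1]
  -- combine
  set X : (ℝ × (Fin d → ℝ)) → ℝ := fun p => ∑ j, ζ j * χ j p.2 p.1 with hX
  set GG : (ℝ × (Fin d → ℝ)) → ℝ := fun p => ∑ j, ζ j * G j p with hGG
  have mXX : MemLp (fun p : (ℝ × (Fin d → ℝ)) × (Fin d → ℝ) => ∑ j, ζ j * χ j p.1.2 p.1.1) 2 (PP a) :=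
    memLp_finsetSum _ fun j _ => (mX j).const_mul _
  have mYY : MemLp (fun p : (ℝ × (Fin d → ℝ)) × (Fin d → ℝ) =>
      ∑ j, ζ j * χ j (p.1.2 + p.2) p.1.1) 2 (PP a) :=
    memLp_finsetSum _ fun j _ => (mY j).const_mul _
  have mLL : MemLp (fun p : (ℝ × (Fin d → ℝ)) × (Fin d → ℝ) => ∑ j, ζ j * p.2 j) 2 (PP a) :=
    memLp_finsetSum _ fun j _ => (mL j).const_mul _
  have iT := int_w hwm hwK mXX ((mYY.sub mXX).sub mLL)
  simp only [Pi.sub_apply] at iT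
  have ae1 : ∀ᵐ p ∂(sig.prod (Cm d)), (∫ z, w (p, z) * ((∑ j, ζ j * χ j p.2 p.1) *
      ((∑ j, ζ j * χ j (p.2 + z) p.1) - (∑ j, ζ j * χ j p.2 p.1)
        - (∑ j, ζ j * z j))) ∂(Am a)) = X p * GG p := by
    have h1 : ∀ᵐ p ∂(sig.prod (Cm d)), ∀ j, Integrable (fun z => w (p, z) * (χ j (p.2 + z) p.1 - χ j p.2 p.1)) (Am a) :=
      ae_all_iff.2 fun j => (i1 j).prod_right_ae
    have h2 : ∀ᵐ p ∂(sig.prod (Cm d)), ∀ j, Integrable (fun z => w (p, z) * z j) (Am a) :=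
      ae_all_iff.2 fun j => (i2 j).prod_right_ae
    filter_upwards [h1, h2] with p h1 h2
    have : GG p = ∫ z, ∑ j, ζ j * (w (p, z) * (χ j (p.2 + z) p.1 - χ j p.2 p.1) - w (p, z) * z j) ∂(Am a) := by
      rw [integral_finsetSum _ fun j _ => ((h1 j).fsub (h2 j)).const_mul _]
      simp only [hGG, G1]
      refine Finset.sum_congr rfl fun j _ => ?_
      rw [integral_const_mul, integral_sub (h1 j) (h2 j)]
    rw [this, ← integral_const_mul]
    congr 1; ext z
    rw [← Finset.sum_sub_distrib, ← Finset.sum_sub_distrib]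
    simp only [hX, Finset.mul_sum]
    refine Finset.sum_congr rfl fun j _ => ?_
    ring
  have iXG : Integrable (fun p => X p * GG p) (sig.prod (Cm d)) :=
    iT.integral_prod_left.congr ae1
  rw [integral_prod _ iT, integral_congr_ae ae1, integral_prod_symm _ iXG]
  have hz : ∀ᵐ ξ ∂(Cm d), ∫ s, X (s, ξ) * GG (s, ξ) ∂sig = 0 := by
    have h1 : ∀ᵐ ξ ∂(Cm d), ∀ j, Integrable (fun s => G j (s, ξ)) sig :=
      ae_all_iff.2 fun j => (iG j).prod_left_ae
    have h2 : ∀ᵐ ξ ∂(Cm d), ∀ j, ∀ s ∈ Set.Icc (0 : ℝ) 1,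
        χ j ξ s = χ j ξ 0 + ∫ τ in (0 : ℝ)..s, G j (τ, ξ) :=
      ae_all_iff.2 fun j => ae_restrict_of_ae (hχ j).2.2.2.2
    filter_upwards [h1, h2] with ξ h1 h2
    have h1' : ∀ j, IntervalIntegrable (fun s => G j (s, ξ)) volume 0 1 := fun j => by
      rw [intervalIntegrable_iff_integrableOn_Ioo_of_le zero_le_one]; exact h1 j
    have := ode_zero (fun s => X (s, ξ)) (fun s => GG (s, ξ))
      (by
        have := IntervalIntegrable.sum Finset.univ (f := fun j s => ζ j * G j (s, ξ))
          (fun j _ => (h1' j).const_mul (ζ j))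
        have e : (fun s => GG (s, ξ)) = ∑ j, fun s => ζ j * G j (s, ξ) := by
          ext s; simp [hGG]
        rw [e]; exact this) ?_ ?_
    · rw [intervalIntegral.integral_of_le zero_le_one, integral_Ioc_eq_integral_Ioo] at this
      exact this
    · intro s hs
      simp only [hX, hGG]
      rw [intervalIntegral.integral_finsetSum, ← Finset.sum_add_distrib]
      · refine Finset.sum_congr rfl fun j _ => ?_
        rw [intervalIntegral.integral_const_mul, h2 j s hs]; ring
      · intro j _
        refine ((h1' j).mono_set ?_).const_mul _
        rw [Set.uIcc_of_le hs.1, Set.uIcc_of_le zero_le_one]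
        exact Set.Icc_subset_Icc_right hs.2
    · simp only [hX]
      refine Finset.sum_congr rfl fun j _ => ?_
      have := (hχ j).2.2.1 ξ 0
      rw [zero_add] at this
      rw [this]
  rw [integral_congr_ae hz]; simp

lemma rigid [IsProbabilityMeasure (Am a)] (f : (Fin d → ℝ) → ℝ → ℝ)
    (hper : ∀ ξ s, ∀ k : Fin d → ℤ, f (ξ + fun i => (k i : ℝ)) s = f ξ s)
    (ζ : Fin d → ℝ)
    (h : ∀ᵐ p ∂(PP a), f (p.1.2 + p.2) p.1.1 - f p.1.2 p.1.1 = ∑ j, ζ j * p.2 j) : ζ = 0 := by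
  have shift : ∀ c : Fin d → ℝ, MeasurePreserving (fun p : ℝ × (Fin d → ℝ) => (p.1, fr (p.2 + c)))
      (sig.prod (Cm d)) (sig.prod (Cm d)) := fun c => (MeasurePreserving.id sig).prod (fr_pres c)
  have hfr : ∀ x y s, f (fr x + y) s = f (x + y) s := fun x y s =>
    fr_add (f := fun x => f x s) (fun ξ k => hper ξ _ k) x y
  have hfr0 : ∀ x s, f (fr x) s = f x s := fun x s =>
    fr_per (f := fun x => f x s) (fun ξ k => hper ξ _ k) x
  let H : AddSubgroup (Fin d → ℝ) :=
    { carrier := {z | ∀ᵐ p ∂(sig.prod (Cm d)), f (p.2 + z) p.1 - f p.2 p.1 = ∑ j, ζ j * z j}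
      zero_mem' := by simp
      add_mem' := by
        intro y z hy hz
        have hz' := (shift y).quasiMeasurePreserving.ae hz
        simp only [Set.mem_setOf_eq] at hy ⊢
        filter_upwards [hy, hz'] with p h1 h2
        simp only [hfr, hfr0] at h2
        simp only [Pi.add_apply, mul_add, Finset.sum_add_distrib]
        rw [← h1, ← h2, add_assoc]; ring
      neg_mem' := by
        intro z hz
        have hz' := (shift (-z)).quasiMeasurePreserving.ae hz
        simp only [Set.mem_setOf_eq] at ⊢
        filter_upwards [hz'] with p h2
        simp only [hfr, hfr0, neg_add_cancel_right] at h2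
        simp only [Pi.neg_apply, mul_neg, Finset.sum_neg_distrib]
        rw [← h2]; ring }
  have hH : ∀ᵐ z ∂(Am a), z ∈ H := by
    have h' : ∀ᵐ q ∂((Am a).prod (sig.prod (Cm d))),
        f (q.2.2 + q.1) q.2.1 - f q.2.2 q.2.1 = ∑ j, ζ j * q.1 j :=
      (Measure.measurePreserving_swap (μ := Am a) (ν := sig.prod (Cm d))).quasiMeasurePreserving.ae h
    exact Measure.ae_ae_of_ae_prod h'
  have hnhds : (H : Set (Fin d → ℝ)) ∈ nhds 0 := by
    have hnull : Am a (H : Set (Fin d → ℝ))ᶜ = 0 := hH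
    set S : Set (Fin d → ℝ) := (toMeasurable (Am a) (H : Set (Fin d → ℝ))ᶜ)ᶜ with hS
    have hSm : MeasurableSet S := (measurableSet_toMeasurable _ _).compl
    have hSH : S ⊆ H := by
      rw [hS, Set.compl_subset_comm]; exact subset_toMeasurable _ _
    have hS1 : Am a S = 1 := by
      rw [hS, prob_compl_eq_one_iff (measurableSet_toMeasurable _ _), measure_toMeasurable, hnull]
    have hpos : 0 < (volume : Measure (Fin d → ℝ)) S := by
      rw [pos_iff_ne_zero]
      intro h0
      have : Am a S = 0 := withDensity_absolutelyContinuous _ _ h0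
      rw [hS1] at this; exact one_ne_zero this
    have := Measure.sub_mem_nhds_zero_of_addHaar_pos volume S hSm hpos
    refine Filter.mem_of_superset this ?_
    rintro _ ⟨x, hx, y, hy, rfl⟩
    exact H.sub_mem (hSH hx) (hSH hy)
  ext i
  have ht : Filter.Tendsto (fun n : ℕ => (1 / ((n:ℝ) + 1)) • (Pi.single i 1 : Fin d → ℝ))
      Filter.atTop (nhds 0) := by
    have := (tendsto_one_div_add_atTop_nhds_zero_nat (𝕜 := ℝ)).smul_const (Pi.single i 1 : Fin d → ℝ)
    simpa using this
  obtain ⟨n, hn⟩ := (ht.eventually hnhds).exists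
  have hm : (Pi.single i 1 : Fin d → ℝ) ∈ H := by
    have := H.nsmul_mem hn (n+1)
    convert this using 1
    rw [← Nat.cast_smul_eq_nsmul ℝ, smul_smul]
    push_cast
    rw [mul_one_div_cancel (by positivity), one_smul]
  have hm' : ∀ᵐ p ∂(sig.prod (Cm d)), f (p.2 + Pi.single i 1) p.1 - f p.2 p.1
      = ∑ j, ζ j * (Pi.single i 1 : Fin d → ℝ) j := hm
  obtain ⟨p, hp⟩ := hm'.exists
  have e : (Pi.single i 1 : Fin d → ℝ) = fun j => (((Pi.single i 1 : Fin d → ℤ) j : ℤ) : ℝ) := by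
    ext j; by_cases hj : j = i
    · subst hj; simp
    · simp [hj]
  have := hper p.2 p.1 (Pi.single i 1)
  rw [← e] at this
  rw [this, sub_self] at hp
  simpa [Pi.single_apply] using hp.symm

lemma coerc (hd : 1 ≤ d) (M : Fin d → Fin d → ℝ)
    (h : ∀ ζ : Fin d → ℝ, ζ ≠ 0 → 0 < ∑ i, (∑ j, M i j * ζ j) * ζ i) :
    ∃ c : ℝ, 0 < c ∧ ∀ ζ : Fin d → ℝ,
      c * (∑ i, ζ i ^ 2) ≤ ∑ i, (∑ j, M i j * ζ j) * ζ i := by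
  haveI : Nonempty (Fin d) := ⟨⟨0, hd⟩⟩
  obtain ⟨x, hx, hmin⟩ := (isCompact_sphere (0 : Fin d → ℝ) 1).exists_isMinOn
    (NormedSpace.sphere_nonempty.2 zero_le_one)
    (f := fun ζ => ∑ i, (∑ j, M i j * ζ j) * ζ i) (by fun_prop)
  set m := ∑ i, (∑ j, M i j * x j) * x i with hm
  have hx0 : x ≠ 0 := by rintro rfl; simp at hx
  have hmpos : 0 < m := h x hx0
  have hdpos : (0:ℝ) < d := by exact_mod_cast hd
  refine ⟨m / d, by positivity, fun ζ => ?_⟩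
  by_cases hζ : ζ = 0
  · simp [hζ]
  have hn : 0 < ‖ζ‖ := norm_pos_iff.2 hζ
  have h1 := hmin (a := ‖ζ‖⁻¹ • ζ) (by simp [norm_smul, hn.ne'])
  have e : ∑ i, (∑ j, M i j * (‖ζ‖⁻¹ • ζ) j) * (‖ζ‖⁻¹ • ζ) i
      = (‖ζ‖^2)⁻¹ * ∑ i, (∑ j, M i j * ζ j) * ζ i := by
    simp only [Pi.smul_apply, smul_eq_mul, Finset.mul_sum, Finset.sum_mul]
    refine Finset.sum_congr rfl fun i _ => Finset.sum_congr rfl fun j _ => ?_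
    field_simp
  simp only [Set.mem_setOf_eq] at h1
  rw [e, inv_mul_eq_div, le_div_iff₀ (by positivity)] at h1
  have h2 : ∑ i, ζ i ^ 2 ≤ d * ‖ζ‖^2 := by
    calc ∑ i, ζ i ^ 2 ≤ ∑ i : Fin d, ‖ζ‖^2 := by
          refine Finset.sum_le_sum fun i _ => ?_
          rw [← sq_abs]
          have := norm_le_pi_norm ζ i
          rw [Real.norm_eq_abs] at this
          gcongr
      _ = d * ‖ζ‖^2 := by simp
  calc m / d * ∑ i, ζ i ^ 2 ≤ m / d * (d * ‖ζ‖^2) := by gcongr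
    _ = m * ‖ζ‖^2 := by field_simp
    _ ≤ _ := h1

end main

/-- The effective matrix `a^eff` is positive definite: there exists `c > 0` with
`(a^eff ζ)·ζ ≥ c |ζ|²` for all `ζ ∈ ℝ^d`. -/
theorem stmt15 {d : ℕ} (hd : 1 ≤ d)
    (a : (Fin d → ℝ) → ℝ) (μ : (Fin d → ℝ) → (Fin d → ℝ) → ℝ → ℝ) (μm μp : ℝ)
    (hameas : Measurable a) (hanonneg : ∀ z, 0 ≤ a z)
    (haint : Integrable a) (hamass : ∫ z, a z = 1)
    (hamom : Integrable (fun z => ‖z‖ ^ 2 * a z))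
    (hasymm : ∀ z, a (-z) = a z)
    (hμmeas : Measurable fun p : (Fin d → ℝ) × (Fin d → ℝ) × ℝ => μ p.1 p.2.1 p.2.2)
    (hμper₁ : ∀ ξ η s, ∀ k : Fin d → ℤ, μ (ξ + fun i => (k i : ℝ)) η s = μ ξ η s)
    (hμper₂ : ∀ ξ η s, ∀ k : Fin d → ℤ, μ ξ (η + fun i => (k i : ℝ)) s = μ ξ η s)
    (hμper₃ : ∀ ξ η s, μ ξ η (s + 1) = μ ξ η s)
    (hμsymm : ∀ ξ η s, μ ξ η s = μ η ξ s)
    (hμm : 0 < μm) (hμlb : ∀ ξ η s, μm ≤ μ ξ η s) (hμub : ∀ ξ η s, μ ξ η s ≤ μp)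
    (χ : Fin d → (Fin d → ℝ) → ℝ → ℝ)
    (hχ : ∀ j : Fin d, IsCellSol a μ (qfun a μ j) (χ j))
    (hχ0 : ∀ j : Fin d,
      (∫ p in cube d ×ˢ Set.Ioo (0 : ℝ) 1, χ j (Prod.fst p) (Prod.snd p)) = 0)
    (ahat : Fin d → Fin d → ℝ)
    (hahat : ∀ i j, ahat i j =
      ∫ s in Set.Ioo (0 : ℝ) 1, ∫ ξ in cube d, ∫ η,
        a (ξ - η) * μ ξ η s *
          ((1 / 2) * (η i - ξ i) * (η j - ξ j) - (η i - ξ i) * χ j η s))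
    (aeff : Fin d → Fin d → ℝ)
    (haeff : ∀ i j, aeff i j = (1 / 2) * (ahat i j + ahat j i)) :
    ∃ c : ℝ, 0 < c ∧ ∀ ζ : Fin d → ℝ,
      c * (∑ i, ζ i ^ 2) ≤ ∑ i, (∑ j, aeff i j * ζ j) * ζ i := by
  haveI := Am_prob hanonneg haint hamass
  apply coerc hd
  intro ζ hζ
  have hK : ∀ ξ η s, |μ ξ η s| ≤ μp := fun ξ η s => by
    rw [abs_of_pos (hμm.trans_le (hμlb ξ η s))]; exact hμub ξ η s
  set w : (ℝ × (Fin d → ℝ)) × (Fin d → ℝ) → ℝ := fun p => μ p.1.2 (p.1.2 + p.2) p.1.1 with hw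
  have hwm : Measurable w := by
    have : Measurable (fun p : (ℝ × (Fin d → ℝ)) × (Fin d → ℝ) =>
      ((p.1.2, (p.1.2 + p.2, p.1.1)) : (Fin d → ℝ) × (Fin d → ℝ) × ℝ)) := by fun_prop
    exact hμmeas.comp this
  have hwK : ∀ p, |w p| ≤ μp := fun p => hK _ _ _
  have mX := fun j => memX (a := a) (hχ j).1 (hχ j).2.2.2.1
  have mY := fun j => memY hameas hasymm (hχ j).1 (hχ j).2.1 (hχ j).2.2.2.1
  have mL := memL hameas hanonneg hamom
  set X : (ℝ × (Fin d → ℝ)) × (Fin d → ℝ) → ℝ := fun p => ∑ j, ζ j * χ j p.1.2 p.1.1 with hX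
  set Y : (ℝ × (Fin d → ℝ)) × (Fin d → ℝ) → ℝ :=
    fun p => ∑ j, ζ j * χ j (p.1.2 + p.2) p.1.1 with hY
  set L : (ℝ × (Fin d → ℝ)) × (Fin d → ℝ) → ℝ := fun p => ∑ j, ζ j * p.2 j with hL
  have mXX : MemLp X 2 (PP a) := memLp_finsetSum _ fun j _ => (mX j).const_mul _
  have mYY : MemLp Y 2 (PP a) := memLp_finsetSum _ fun j _ => (mY j).const_mul _
  have mLL : MemLp L 2 (PP a) := memLp_finsetSum _ fun j _ => (mL j).const_mul _
  have iij : ∀ i j, Integrable (fun p : (ℝ × (Fin d → ℝ)) × (Fin d → ℝ) => w p *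
      (1 / 2 * p.2 i * p.2 j - p.2 i * χ j (p.1.2 + p.2) p.1.1)) (PP a) := by
    intro i j
    have := ((int_w hwm hwK (mL i) (mL j)).const_mul (1/2)).fsub (int_w hwm hwK (mL i) (mY j))
    refine this.congr (Filter.Eventually.of_forall fun p => ?_)
    simp only; ring
  have hat : ∀ i j, ahat i j = ∫ p, w p *
      (1 / 2 * p.2 i * p.2 j - p.2 i * χ j (p.1.2 + p.2) p.1.1) ∂(PP a) := by
    intro i j
    rw [hahat, integral_prod _ (iij i j), integral_prod _ (iij i j).integral_prod_left]
    change ∫ s, ∫ ξ, _ ∂(Cm d) ∂sig = _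
    congr 1; ext s; congr 1; ext ξ
    simp only [mul_assoc]
    rw [conv_int hameas hanonneg hasymm (fun η => μ ξ η s * (1 / 2 * ((η i - ξ i) * (η j - ξ j))
      - (η i - ξ i) * χ j η s))]
    simp [hw]
  have hsum : ∑ i, (∑ j, aeff i j * ζ j) * ζ i
      = ∫ p, w p * (1/2 * L p * L p - L p * Y p) ∂(PP a) := by
    have e1 : ∑ i, (∑ j, aeff i j * ζ j) * ζ i = ∑ i, ∑ j, ζ i * ζ j * ahat i j := by
      have e2 : ∑ i, ∑ j, ζ i * ζ j * ahat j i = ∑ i, ∑ j, ζ i * ζ j * ahat i j := by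
        rw [Finset.sum_comm]
        refine Finset.sum_congr rfl fun i _ => Finset.sum_congr rfl fun j _ => ?_
        ring
      have e3 : ∑ i, (∑ j, aeff i j * ζ j) * ζ i
          = 1/2 * ∑ i, ∑ j, ζ i * ζ j * ahat i j + 1/2 * ∑ i, ∑ j, ζ i * ζ j * ahat j i := by
        simp only [Finset.mul_sum, Finset.sum_mul, haeff, ← Finset.sum_add_distrib]
        refine Finset.sum_congr rfl fun i _ => Finset.sum_congr rfl fun j _ => ?_
        ring
      rw [e3, e2]; ring
    have e4 : ∀ p, w p * (1/2 * L p * L p - L p * Y p) = ∑ i, ∑ j, ζ i * ζ j * (w p *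
      (1 / 2 * p.2 i * p.2 j - p.2 i * χ j (p.1.2 + p.2) p.1.1)) := by
      intro p
      have : w p * (1/2 * L p * L p - L p * Y p) = 1/2 * w p * (L p * L p) - w p * (L p * Y p) := by
        ring
      rw [this]
      simp only [hL, hY]
      rw [Finset.sum_mul_sum, Finset.sum_mul_sum]
      simp only [Finset.mul_sum, ← Finset.sum_sub_distrib]
      refine Finset.sum_congr rfl fun i _ => Finset.sum_congr rfl fun j _ => ?_
      ring
    rw [e1]
    simp only [e4]
    rw [integral_finsetSum _ fun i _ => integrable_finsetSum _ fun j _ => (iij i j).const_mul _]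
    refine Finset.sum_congr rfl fun i _ => ?_
    rw [integral_finsetSum _ fun j _ => (iij i j).const_mul _]
    refine Finset.sum_congr rfl fun j _ => ?_
    rw [integral_const_mul, hat]
  have h0 := energy hameas hanonneg hamom hasymm hμmeas hK χ hχ ζ
  have hχfr : ∀ j x s, χ j (fr x) s = χ j x s := fun j x s =>
    fr_per (f := fun x => χ j x s) (fun ξ k => (hχ j).2.1 ξ _ k) x
  have hχfr' : ∀ j x y s, χ j (fr x + y) s = χ j (x + y) s := fun j x y s =>
    fr_add (f := fun x => χ j x s) (fun ξ k => (hχ j).2.1 ξ _ k) x y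
  have hq := quad Phi (Phi_pres hameas hasymm) hwm hwK mXX mYY mLL
    (by
      intro p
      simp only [hw, Phi]
      rw [fr_per (f := fun x => μ x (fr (p.1.2 + p.2) + -p.2) p.1.1) (fun ξ k => hμper₁ ξ _ _ k),
        fr_add (f := fun x => μ (p.1.2 + p.2) x p.1.1) (fun ξ k => hμper₂ _ ξ _ k), hμsymm]
      simp)
    (by intro p; simp [hX, hY, Phi, hχfr])
    (by intro p; simp [hX, hY, Phi, hχfr'])
    (by intro p; simp [hL, Phi])
    h0
  rw [hsum, hq]
  have hint : Integrable (fun p => w p * (L p - (Y p - X p))^2) (PP a) := by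
    have := int_w hwm hwK (mLL.sub (mYY.sub mXX)) (mLL.sub (mYY.sub mXX))
    refine this.congr (Filter.Eventually.of_forall fun p => ?_)
    simp only [Pi.sub_apply]; ring
  have hwpos : ∀ p, 0 < w p := fun p => hμm.trans_le (hμlb _ _ _)
  have hnn : 0 ≤ fun p => w p * (L p - (Y p - X p))^2 := fun p =>
    mul_nonneg (hwpos p).le (sq_nonneg _)
  have hne : ∫ p, w p * (L p - (Y p - X p))^2 ∂(PP a) ≠ 0 := by
    intro hz
    rw [integral_eq_zero_iff_of_nonneg hnn hint] at hz
    apply hζ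
    refine rigid (a := a) (fun ξ s => ∑ j, ζ j * χ j ξ s) ?_ ζ ?_
    · intro ξ s k
      simp only [(hχ _).2.1]
    · filter_upwards [hz] with p hp
      have := (mul_eq_zero.1 hp).resolve_left (hwpos p).ne'
      have := pow_eq_zero_iff two_ne_zero |>.1 this
      simp only [hL, hX, hY] at this
      linarith
  have := lt_of_le_of_ne (integral_nonneg hnn) hne.symm
  linarith
end
end
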